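/- arXiv:1707.04745 — 5 statements merged into one kernel-verified Lean document; each statement's English description precedes it below -/
import Mathlib

section
/- Let r ≥ 1 and let p be a real polynomial on ℝⁿ of degree at most r. Let y_j ∈ ℝⁿ with y_j → 0, and let τ_j, h_j be positive real numbers with τ_j → +∞ and h_j → 0. Suppose that for every multi-index α with 1 ≤ |α| ≤ r the limit c_α = lim_{j→∞} τ_j h_j^{|α|} ∂^α p(y_j) exists in ℝ, and define the polynomial q(x) = Σ_{1≤|α|≤r} (c_α/α!) x^α. Then for every multi-index α with |α| ≥ 1 and every x ∈ ℝⁿ one has lim_{j→∞} τ_j h_j^{|α|} (∂^α p)(y_j + h_j x) = ∂^α q(x), and moreover lim_{j→∞} τ_j [p(y_j + h_j x) − p(y_j)] = q(x) for every x ∈ ℝⁿ. -/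
open MeasureTheory Filter Topology Metric

noncomputable section

/-- Euclidean space ℝⁿ. -/
abbrev En (n : ℕ) := EuclideanSpace ℝ (Fin n)

/-- First-order partial derivative in direction `i`, as an endomorphism of functions. -/
noncomputable def pd1 (n : ℕ) (i : Fin n) : Function.End (En n → ℝ) :=
  fun f x => fderiv ℝ f x (EuclideanSpace.single i 1)

/-- Order `|α|` of a multi-index. -/
def mdeg {n : ℕ} (α : Fin n → ℕ) : ℕ := ∑ i, α i

/-- Iterated partial derivative `∂^α`. -/
noncomputable def pdm (n : ℕ) (α : Fin n → ℕ) (f : En n → ℝ) : En n → ℝ :=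
  ((List.ofFn fun i : Fin n => (pd1 n i) ^ (α i)).prod) f

/-- The finite set of multi-indices `lo ≤ |α| ≤ k`. -/
def midx (n k lo : ℕ) : Finset (Fin n → ℕ) :=
  (Finset.Iic fun _ => k).filter fun α => lo ≤ mdeg α ∧ mdeg α ≤ k

/-- `f̃(x) = Σ_{1≤|α|≤k} |∂^α V(x)|^{1/|α|}`. -/
noncomputable def ftil (n k : ℕ) (V : En n → ℝ) (x : En n) : ℝ :=
  ∑ α ∈ midx n k 1, |pdm n α V x| ^ ((1 : ℝ) / (mdeg α))

/-- `f̃_τ(x) = Σ_{1≤|α|≤k} τ^{1/|α|} |∂^α V(x)|^{1/|α|}`. -/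
noncomputable def ftilTau (n k : ℕ) (V : En n → ℝ) (τ : ℝ) (x : En n) : ℝ :=
  ∑ α ∈ midx n k 1, τ ^ ((1 : ℝ) / (mdeg α)) * |pdm n α V x| ^ ((1 : ℝ) / (mdeg α))

/-- Regularized weight `f(x) = Σ_{1≤|α|≤k} (1 + |∂^α V(x)|²)^{1/(2|α|)}`. -/
noncomputable def freg (n k : ℕ) (V : En n → ℝ) (x : En n) : ℝ :=
  ∑ α ∈ midx n k 1, (1 + |pdm n α V x| ^ 2) ^ ((1 : ℝ) / (2 * mdeg α))

/-- The Hessian matrix `(∂_i ∂_j ρ)(x)`. -/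
noncomputable def hessM (n : ℕ) (ρ : En n → ℝ) (x : En n) : Matrix (Fin n) (Fin n) ℝ :=
  fun i j => pd1 n i (pd1 n j ρ) x

/-- Eigenvalues of the Hessian matrix (with value 0 in the degenerate non-symmetric case). -/
noncomputable def hessEig (n : ℕ) (ρ : En n → ℝ) (x : En n) : Fin n → ℝ :=
  if h : (hessM n ρ x).IsHermitian then h.eigenvalues else 0

/-- `Σ_{j ∈ I_{x,ρ}} λ_{ρ,j}(x)`, the sum of the positive eigenvalues of the Hessian. -/
noncomputable def lamPos (n : ℕ) (ρ : En n → ℝ) (x : En n) : ℝ :=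
  ∑ j, max (hessEig n ρ x j) 0

/-- `M_ρ(x) = Σ_j max{−λ_{ρ,j}(x), 0}`. -/
noncomputable def lamNeg (n : ℕ) (ρ : En n → ℝ) (x : En n) : ℝ :=
  ∑ j, max (-(hessEig n ρ x j)) 0

/-- Assumption (i)–(iii) of the paper. -/
def AssumptionA (n k : ℕ) (V : En n → ℝ) : Prop :=
  (∃ C₀ > (1 : ℝ), ∃ δ₁ ∈ Set.Ioo (0 : ℝ) 1, ∀ x : En n,
      lamPos n V x ≤ C₀ * (lamNeg n V x + ‖gradient V x‖ ^ 2
        + (∑ α ∈ midx n k 2, |pdm n α V x| ^ ((2 - δ₁) / (mdeg α))) + 1)) ∧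
  (∃ δ₂ ∈ Set.Ioo (0 : ℝ) 1, ∀ α : Fin n → ℕ, mdeg α = k + 1 →
      ∃ Cα > (0 : ℝ), ∀ x : En n,
        |pdm n α V x| ≤ Cα * (1 + ftil n k V x) ^ ((k : ℝ) + 1 - δ₂)) ∧
  (∀ M : ℝ, ∃ R : ℝ, ∀ x : En n, R ≤ ‖x‖ → M ≤ ftil n k V x)

/-- The Witten-Laplacian quadratic form `Q_{τV}(u) = ∫ |∇u + τ u ∇V|²`. -/
noncomputable def Qform (n : ℕ) (V : En n → ℝ) (τ : ℝ) (u : En n → ℝ) : ℝ :=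
  ∫ x : En n, ‖gradient u x + (τ * u x) • gradient V x‖ ^ 2

/-- `u ∈ C_c^∞(ℝⁿ; ℝ)`. -/
def TestFun (n : ℕ) (u : En n → ℝ) : Prop :=
  ContDiff ℝ (⊤ : ℕ∞) u ∧ HasCompactSupport u

/-- `p` is (given by) a real polynomial of total degree at most `r`. -/
def IsPolyDeg (n r : ℕ) (p : En n → ℝ) : Prop :=
  ∃ P : MvPolynomial (Fin n) ℝ, P.totalDegree ≤ r ∧
    ∀ x : En n, p x = MvPolynomial.eval (fun i => x i) P

/-- `q ∈ L_{p,0}` (limiting polynomials of `p` at `0` of degree at most `r`). -/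
def memL (n r : ℕ) (p q : En n → ℝ) : Prop :=
  IsPolyDeg n r q ∧ q 0 = 0 ∧
  ∃ y : ℕ → En n, ∃ τ h : ℕ → ℝ,
    Tendsto y atTop (nhds 0) ∧ (∀ j, 0 < τ j) ∧ (∀ j, 0 < h j) ∧
    Tendsto τ atTop atTop ∧ Tendsto h atTop (nhds 0) ∧
    ∀ α : Fin n → ℕ, 1 ≤ mdeg α → mdeg α ≤ r →
      Tendsto (fun j => τ j * h j ^ (mdeg α) * pdm n α p (y j)) atTop
        (nhds (pdm n α q 0))


open MvPolynomial in
/-- The function on `En n` given by a polynomial. -/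
def evf {n : ℕ} (P : MvPolynomial (Fin n) ℝ) : En n → ℝ :=
  fun x => MvPolynomial.eval (fun i => x i) P

/-- First-order partial derivative as a linear endomorphism. -/
def pdl {n : ℕ} (i : Fin n) : Module.End ℝ (MvPolynomial (Fin n) ℝ) :=
  (MvPolynomial.pderiv i).toLinearMap

/-- Iterated partial derivative of polynomials along a list of indices. -/
def pdL {n : ℕ} (α : Fin n → ℕ) (L : List (Fin n)) :
    Module.End ℝ (MvPolynomial (Fin n) ℝ) :=
  (L.map fun i => pdl i ^ α i).prod

/-- The substitution `x ↦ y + h x`. -/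
def subst {n : ℕ} (y : Fin n → ℝ) (h : ℝ) :
    MvPolynomial (Fin n) ℝ →ₐ[ℝ] MvPolynomial (Fin n) ℝ :=
  MvPolynomial.aeval fun i => MvPolynomial.C (y i) + MvPolynomial.C h * MvPolynomial.X i

open MvPolynomial in
lemma evf_hasFDerivAt {n : ℕ} (P : MvPolynomial (Fin n) ℝ) (x : En n) :
    HasFDerivAt (evf P) (∑ i, (evf (pderiv i P) x) • (EuclideanSpace.proj i : En n →L[ℝ] ℝ)) x := by
  induction P using MvPolynomial.induction_on with
  | C a =>
    have : evf (C a : MvPolynomial (Fin n) ℝ) = fun _ => a := by ext; simp [evf]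
    rw [this]
    simpa [evf] using hasFDerivAt_const a x
  | add p q hp hq =>
    have : evf (p + q) = evf p + evf q := by ext; simp [evf]
    rw [this]
    refine (hp.add hq).congr_fderiv ?_
    ext v
    simp [evf, add_mul, Finset.sum_add_distrib]
  | mul_X p i hp =>
    have : evf (p * X i) = fun x => evf p x * (EuclideanSpace.proj i : En n →L[ℝ] ℝ) x := by
      ext; simp [evf]
    rw [this]
    refine (hp.mul (EuclideanSpace.proj i : En n →L[ℝ] ℝ).hasFDerivAt).congr_fderiv ?_
    ext v
    simp [evf, add_mul, Finset.sum_add_distrib, pderiv_X, Pi.single_apply, Finset.mul_sum,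
      apply_ite, mul_assoc]

lemma pd1_evf {n : ℕ} (i : Fin n) (P : MvPolynomial (Fin n) ℝ) :
    pd1 n i (evf P) = evf (pdl i P) := by
  ext x
  unfold pd1
  rw [(evf_hasFDerivAt P x).fderiv]
  simp [pdl, Finset.sum_apply, Pi.single_apply]

lemma pd1_pow_evf {n : ℕ} (i : Fin n) (k : ℕ) (P : MvPolynomial (Fin n) ℝ) :
    (pd1 n i ^ k) (evf P) = evf ((pdl i ^ k) P) := by
  induction k generalizing P with
  | zero => rfl
  | succ k ih =>
    rw [pow_succ, pow_succ]
    change (pd1 n i ^ k) (pd1 n i (evf P)) = _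
    rw [pd1_evf, ih]; rfl

lemma pdm_evf {n : ℕ} (α : Fin n → ℕ) (P : MvPolynomial (Fin n) ℝ) :
    pdm n α (evf P) = evf (pdL α (List.finRange n) P) := by
  unfold pdm pdL
  rw [List.ofFn_eq_map]
  generalize List.finRange n = L
  induction L with
  | nil => rfl
  | cons i L ih =>
    simp only [List.map_cons, List.prod_cons]
    change (pd1 n i ^ α i) ((L.map fun i => pd1 n i ^ α i).prod (evf P)) = _
    rw [ih, pd1_pow_evf]; rfl

open MvPolynomial in
lemma pdl_subst {n : ℕ} (y : Fin n → ℝ) (h : ℝ) (i : Fin n) (P : MvPolynomial (Fin n) ℝ) :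
    pdl i (subst y h P) = h • subst y h (pdl i P) := by
  change pderiv i (subst y h P) = h • subst y h (pderiv i P)
  induction P using MvPolynomial.induction_on with
  | C a => simp [subst, algebraMap_eq]
  | add p q hp hq => simp [hp, hq]
  | mul_X p j hp =>
    have hX : subst y h (X j) = C (y j) + C h * X j := by simp [subst]
    rw [map_mul, Derivation.leibniz, hp, Derivation.leibniz, hX]
    by_cases hij : j = i
    · subst hij
      simp [hX, smul_eq_C_mul]; ring
    · simp [hX, smul_eq_C_mul, pderiv_X_of_ne hij]; ring

lemma pdl_pow_subst {n : ℕ} (y : Fin n → ℝ) (h : ℝ) (i : Fin n) (k : ℕ)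
    (P : MvPolynomial (Fin n) ℝ) :
    (pdl i ^ k) (subst y h P) = h ^ k • subst y h ((pdl i ^ k) P) := by
  induction k generalizing P with
  | zero => simp
  | succ k ih =>
    rw [pow_succ, Module.End.mul_apply, Module.End.mul_apply, pdl_subst, map_smul, ih, smul_smul,
      pow_succ, mul_comm]

lemma pdL_subst {n : ℕ} (y : Fin n → ℝ) (h : ℝ) (α : Fin n → ℕ) (L : List (Fin n))
    (P : MvPolynomial (Fin n) ℝ) :
    pdL α L (subst y h P) = h ^ (L.map α).sum • subst y h (pdL α L P) := by
  unfold pdL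
  induction L with
  | nil => simp
  | cons i L ih =>
    simp only [List.map_cons, List.prod_cons, Module.End.mul_apply, List.sum_cons]
    rw [ih, map_smul, pdl_pow_subst, smul_smul, pow_add, mul_comm]

lemma mdeg_eq {n : ℕ} (α : Fin n → ℕ) : mdeg α = ((List.finRange n).map α).sum := by
  rw [← List.ofFn_eq_map, List.sum_ofFn]; rfl

open MvPolynomial in
lemma coeff_pdl_pow {n : ℕ} (i : Fin n) (k : ℕ) (γ : Fin n →₀ ℕ) (P : MvPolynomial (Fin n) ℝ) :
    coeff γ ((pdl i ^ k) P) =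
      ((γ i + k).descFactorial k : ℝ) * coeff (γ + Finsupp.single i k) P := by
  induction k generalizing P with
  | zero => simp
  | succ k ih =>
    rw [pow_succ, Module.End.mul_apply, ih]
    change _ * coeff _ (pderiv i P) = _
    rw [coeff_pderiv, add_assoc, ← Finsupp.single_add, ← add_assoc (γ i),
      Nat.succ_descFactorial_succ]
    simp
    ring

open MvPolynomial in
lemma coeff_pdL {n : ℕ} (α : Fin n → ℕ) (L : List (Fin n)) (hL : L.Nodup) (γ : Fin n →₀ ℕ)
    (P : MvPolynomial (Fin n) ℝ) :
    coeff γ (pdL α L P) =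
      (L.map fun i => ((γ i + α i).descFactorial (α i) : ℝ)).prod *
        coeff (γ + (L.map fun i => Finsupp.single i (α i)).sum) P := by
  induction L generalizing γ with
  | nil => simp [pdL]
  | cons i L ih =>
    have : pdL α (i :: L) P = (pdl i ^ α i) (pdL α L P) := by simp [pdL]
    rw [this, coeff_pdl_pow, ih hL.of_cons]
    simp only [List.map_cons, List.prod_cons, List.sum_cons]
    rw [mul_assoc, add_assoc]
    congr 3
    apply List.map_congr_left
    intro j hj
    have : i ≠ j := by rintro rfl; exact (List.nodup_cons.1 hL).1 hj
    simp [Finsupp.single_apply, this]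

/-- Multi-index as a finitely supported function. -/
def toFs {n : ℕ} (α : Fin n → ℕ) : Fin n →₀ ℕ := Finsupp.equivFunOnFinite.symm α

open MvPolynomial in
lemma coeff_pdL_full {n : ℕ} (α : Fin n → ℕ) (γ : Fin n →₀ ℕ) (P : MvPolynomial (Fin n) ℝ) :
    coeff γ (pdL α (List.finRange n) P) =
      (∏ i, ((γ i + α i).descFactorial (α i) : ℝ)) * coeff (γ + toFs α) P := by
  rw [coeff_pdL α _ (List.nodup_finRange n), ← List.ofFn_eq_map, ← List.ofFn_eq_map,
    List.prod_ofFn, List.sum_ofFn]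
  congr 3
  ext j
  simp [toFs, Finsupp.finset_sum_apply, Finsupp.single_apply]

open MvPolynomial in
lemma eval_subst {n : ℕ} (y : Fin n → ℝ) (h : ℝ) (x : Fin n → ℝ) (P : MvPolynomial (Fin n) ℝ) :
    eval x (subst y h P) = eval (fun i => y i + h * x i) P := by
  induction P using MvPolynomial.induction_on with
  | C a => simp [subst, algebraMap_eq]
  | add p q hp hq => simp [hp, hq]
  | mul_X p j hp => simp [hp]; simp [subst]

open MvPolynomial in
lemma pdL_C {n : ℕ} (α : Fin n → ℕ) (hα : 1 ≤ mdeg α) (a : ℝ) :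
    pdL α (List.finRange n) (C a) = 0 := by
  have : (C a : MvPolynomial (Fin n) ℝ) = subst 0 0 (C a) := by simp [subst, algebraMap_eq]
  rw [this, pdL_subst, ← mdeg_eq, zero_pow (by omega), zero_smul]

/-- The rescaled polynomial. -/
def resc {n : ℕ} (P : MvPolynomial (Fin n) ℝ) (y : En n) (τ h : ℝ) : MvPolynomial (Fin n) ℝ :=
  τ • (subst (fun i => y i) h P - MvPolynomial.C (evf P y))

lemma evf_pdL_resc {n : ℕ} (P : MvPolynomial (Fin n) ℝ) (y : En n) (τ h : ℝ) (α : Fin n → ℕ)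
    (hα : 1 ≤ mdeg α) (x : En n) :
    evf (pdL α (List.finRange n) (resc P y τ h)) x =
      τ * h ^ mdeg α * evf (pdL α (List.finRange n) P) (y + h • x) := by
  unfold resc
  rw [map_smul, map_sub, pdL_C α hα, pdL_subst, ← mdeg_eq]
  simp [evf, MvPolynomial.smul_eval, eval_subst, mul_assoc]

lemma evf_resc {n : ℕ} (P : MvPolynomial (Fin n) ℝ) (y : En n) (τ h : ℝ) (x : En n) :
    evf (resc P y τ h) x = τ * (evf P (y + h • x) - evf P y) := by
  simp [resc, evf, MvPolynomial.smul_eval, eval_subst]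

open MvPolynomial in
lemma evf_zero {n : ℕ} (P : MvPolynomial (Fin n) ℝ) : evf P 0 = coeff 0 P := by
  have : (fun i => (0 : En n) i) = (0 : Fin n → ℝ) := by ext; simp
  rw [evf, this, ← constantCoeff_eq, constantCoeff_eq, eval_zero, constantCoeff_eq]

open MvPolynomial in
lemma evf_pdL_zero {n : ℕ} (P : MvPolynomial (Fin n) ℝ) (α : Fin n → ℕ) :
    evf (pdL α (List.finRange n) P) 0 =
      ((∏ i, (α i).factorial : ℕ) : ℝ) * coeff (toFs α) P := by
  rw [evf_zero, coeff_pdL_full]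
  simp [Nat.descFactorial_self]

open MvPolynomial in
lemma coeff_resc {n : ℕ} (P : MvPolynomial (Fin n) ℝ) (y : En n) (τ h : ℝ) (α : Fin n → ℕ)
    (hα : 1 ≤ mdeg α) :
    coeff (toFs α) (resc P y τ h) =
      τ * h ^ mdeg α * pdm n α (evf P) y / ((∏ i, (α i).factorial : ℕ) : ℝ) := by
  have h1 := evf_pdL_resc P y τ h α hα 0
  rw [evf_pdL_zero, smul_zero, add_zero] at h1
  rw [pdm_evf, ← h1, mul_div_cancel_left₀]
  exact_mod_cast Finset.prod_ne_zero_iff.2 fun i _ => Nat.factorial_ne_zero _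

open MvPolynomial in
lemma pdL_eq_zero {n r : ℕ} (P : MvPolynomial (Fin n) ℝ) (hP : P.totalDegree ≤ r)
    (α : Fin n → ℕ) (hα : r < mdeg α) : pdL α (List.finRange n) P = 0 := by
  ext γ
  rw [coeff_pdL_full, coeff_eq_zero_of_totalDegree_lt, mul_zero, coeff_zero]
  refine lt_of_le_of_lt hP (hα.trans_le ?_)
  have : ∑ i ∈ (γ + toFs α).support, (γ + toFs α) i = ∑ i, (γ + toFs α) i :=
    Finset.sum_subset (Finset.subset_univ _) (by simp)
  rw [this]
  exact Finset.sum_le_sum fun i _ => by simp [toFs]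

lemma mem_midx {n r : ℕ} (α : Fin n → ℕ) : α ∈ midx n r 1 ↔ 1 ≤ mdeg α ∧ mdeg α ≤ r := by
  simp only [midx, Finset.mem_filter, Finset.mem_Iic, and_iff_right_iff_imp]
  rintro ⟨_, h2⟩ i
  exact (Finset.single_le_sum (f := α) (fun _ _ => Nat.zero_le _) (Finset.mem_univ i)).trans h2

open MvPolynomial in
lemma resc_eq_sum {n r : ℕ} (P : MvPolynomial (Fin n) ℝ) (hP : P.totalDegree ≤ r)
    (y : En n) (τ h : ℝ) :
    resc P y τ h = ∑ α ∈ midx n r 1,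
      (τ * h ^ mdeg α * pdm n α (evf P) y / ((∏ i, (α i).factorial : ℕ) : ℝ)) •
        monomial (toFs α) (1 : ℝ) := by
  ext γ
  obtain ⟨β, rfl⟩ : ∃ β, toFs β = γ := ⟨γ, Finsupp.equivFunOnFinite.symm_apply_apply γ⟩
  have hinj : ∀ a b : Fin n → ℕ, toFs a = toFs b ↔ a = b := fun a b =>
    Finsupp.equivFunOnFinite.symm.injective.eq_iff
  simp only [coeff_sum, coeff_smul, coeff_monomial, hinj, smul_eq_mul, mul_ite, mul_one, mul_zero,
    Finset.sum_ite_eq']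
  split_ifs with hβ
  · exact coeff_resc P y τ h β ((mem_midx β).1 hβ).1
  · by_cases h1 : 1 ≤ mdeg β
    · have h2 : r < mdeg β := by
        by_contra h2
        exact hβ ((mem_midx β).2 ⟨h1, by omega⟩)
      rw [coeff_resc P y τ h β h1, pdm_evf, pdL_eq_zero P hP β h2]
      simp [evf]
    · have h0 : toFs β = 0 := by
        have h3 : ∑ i, β i = 0 := by unfold mdeg at h1; omega
        ext i
        simpa [toFs] using Finset.sum_eq_zero_iff.1 h3 i (Finset.mem_univ i)
      rw [h0, ← evf_zero, evf_resc]
      simp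


/-- convergence of rescaled derivatives to the limiting polynomial. -/
theorem limiting_polynomial_convergence (n r : ℕ) (hr : 1 ≤ r)
    (p : En n → ℝ) (hp : IsPolyDeg n r p)
    (y : ℕ → En n) (τ h : ℕ → ℝ)
    (hy : Tendsto y atTop (nhds 0)) (hτpos : ∀ j, 0 < τ j) (hhpos : ∀ j, 0 < h j)
    (hτ : Tendsto τ atTop atTop) (hh : Tendsto h atTop (nhds 0))
    (c : (Fin n → ℕ) → ℝ)
    (hc : ∀ α : Fin n → ℕ, 1 ≤ mdeg α → mdeg α ≤ r →
      Tendsto (fun j => τ j * h j ^ mdeg α * pdm n α p (y j)) atTop (nhds (c α)))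
    (q : En n → ℝ)
    (hq : ∀ x : En n, q x = ∑ α ∈ midx n r 1,
      (c α / ((∏ i, (α i).factorial : ℕ) : ℝ)) * ∏ i, x i ^ α i) :
    (∀ α : Fin n → ℕ, 1 ≤ mdeg α → ∀ x : En n,
      Tendsto (fun j => τ j * h j ^ mdeg α * pdm n α p (y j + h j • x)) atTop
        (nhds (pdm n α q x))) ∧
    (∀ x : En n,
      Tendsto (fun j => τ j * (p (y j + h j • x) - p (y j))) atTop (nhds (q x))) := by
  obtain ⟨P, hP, hpP⟩ := hp
  obtain rfl : p = evf P := funext hpP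
  have hqQ : q = evf (∑ α ∈ midx n r 1,
      (c α / ((∏ i, (α i).factorial : ℕ) : ℝ)) • MvPolynomial.monomial (toFs α) (1 : ℝ)) := by
    ext x
    rw [hq]
    simp [evf, MvPolynomial.smul_eval, MvPolynomial.eval_monomial, toFs, Finsupp.prod_fintype]
  have key : ∀ (T : MvPolynomial (Fin n) ℝ →ₗ[ℝ] MvPolynomial (Fin n) ℝ) (x : En n),
      Tendsto (fun j => evf (T (resc P (y j) (τ j) (h j))) x) atTop
        (nhds (evf (T (∑ α ∈ midx n r 1, (c α / ((∏ i, (α i).factorial : ℕ) : ℝ)) •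
          MvPolynomial.monomial (toFs α) (1 : ℝ))) x)) := by
    intro T x
    simp only [resc_eq_sum P hP, map_sum, map_smul, evf, MvPolynomial.smul_eval]
    refine tendsto_finset_sum _ fun α hα => ?_
    have hα' := (mem_midx α).1 hα
    exact ((hc α hα'.1 hα'.2).div_const _).mul_const _
  constructor
  · intro α hα x
    have := key (pdL α (List.finRange n)) x
    simp only [evf_pdL_resc _ _ _ _ _ hα] at this
    rw [hqQ]
    simpa only [pdm_evf] using this
  · intro x
    have := key LinearMap.id x
    simp only [LinearMap.id_apply, evf_resc] at this
    rw [hqQ]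
    exact this

end
end

section
/- Let r ≥ 1 and let p ∈ E_r satisfy: there exist constants σ > 0 and C > 0 such that for all x ∈ B_σ, Σ_{j∈I_{x,p}} λ_{p,j}(x) ≤ C (M_p(x) + |∇p(x)|²). Then there exist a radius σ' ∈ (0, σ] and a constant c₀ > 0 (depending on p) such that for every τ > 0 and every u ∈ C_c^∞(B_{σ'}; ℝ): ‖∇u‖²_{L²} + τ² ∫ |∇p(x)|² |u(x)|² dx ≤ c₀ ∫ |∇u(x) + τ u(x) ∇p(x)|² dx + c₀ ‖u‖²_{L²}. -/
open MeasureTheory Filter Topology Metric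

noncomputable section

/-- Multi-indices with each entry at most `r`. -/
abbrev Mi (n r : ℕ) := Fin n → Fin (r+1)

def mon {n r : ℕ} (α : Mi n r) (z : En n) : ℝ := ∏ i, z i ^ (α i : ℕ)

def dg {n r : ℕ} (α : Mi n r) : ℕ := ∑ i, (α i : ℕ)

def bp {n r : ℕ} (c : Mi n r → ℝ) (z : En n) : ℝ := ∑ α, c α * mon α z

def tc {n r : ℕ} (c : Mi n r → ℝ) (x : En n) (α : Mi n r) : ℝ :=
  ∑ β : Mi n r, c β * ∏ i, (((β i : ℕ).choose (α i : ℕ) : ℝ) * x i ^ ((β i : ℕ) - (α i : ℕ)))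

lemma exists_bp {n r : ℕ} {p : En n → ℝ} (hp : IsPolyDeg n r p) :
    ∃ c : Mi n r → ℝ, ∀ x, p x = bp c x := by
  classical
  obtain ⟨P, hP, hpx⟩ := hp
  refine ⟨fun α => P.coeff (Finsupp.equivFunOnFinite.symm fun i => (α i : ℕ)), fun x => ?_⟩
  rw [hpx, MvPolynomial.eval_eq', bp]
  have hle : ∀ d ∈ P.support, ∀ i, d i < r + 1 := by
    intro d hd i
    have h1 := MvPolynomial.le_totalDegree hd
    have h2 : d i ≤ d.sum fun _ e => e := by
      rw [Finsupp.sum_fintype _ _ (fun _ => rfl)]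
      exact Finset.single_le_sum (f := fun i => d i) (fun _ _ => Nat.zero_le _) (Finset.mem_univ i)
    omega
  refine Finset.sum_bij_ne_zero (fun d hd _ => fun i => ⟨d i, hle d hd i⟩) ?_ ?_ ?_ ?_
  · intros; simp
  · intro d1 h1 _ d2 h2 _ h
    ext i
    have := congrFun h i
    simpa using this
  · intro α _ hα
    have hc : P.coeff (Finsupp.equivFunOnFinite.symm fun i => (α i : ℕ)) ≠ 0 := left_ne_zero_of_mul hα
    refine ⟨Finsupp.equivFunOnFinite.symm fun i => (α i : ℕ), MvPolynomial.mem_support_iff.2 hc, ?_, ?_⟩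
    · simpa [mon] using hα
    · ext i; simp
  · intro d hd _
    have : (Finsupp.equivFunOnFinite.symm fun i => d i) = d := by ext; simp
    simp [mon, this]

lemma bp_add {n r : ℕ} (c : Mi n r → ℝ) (x z : En n) : bp c (x + z) = bp (tc c x) z := by
  classical
  have h1 : ∀ β : Mi n r, mon β (x + z) = ∑ α : Mi n r, (∏ i, (((β i : ℕ).choose (α i : ℕ) : ℝ) * x i ^ ((β i : ℕ) - (α i : ℕ)))) * mon α z := by
    intro β
    have h2 : ∀ i, (x i + z i) ^ (β i : ℕ) = ∑ j : Fin (r+1), ((((β i : ℕ).choose (j : ℕ) : ℝ) * x i ^ ((β i : ℕ) - (j : ℕ))) * z i ^ (j : ℕ)) := by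
      intro i
      rw [add_comm, add_pow, Fin.sum_univ_eq_sum_range (fun j => (((β i : ℕ).choose (j : ℕ) : ℝ) * x i ^ ((β i : ℕ) - (j : ℕ))) * z i ^ (j : ℕ)) (r+1)]
      symm
      rw [← Finset.sum_subset (s₁ := Finset.range ((β i : ℕ) + 1))]
      · refine Finset.sum_congr rfl fun j _ => by ring
      · intro j hj
        have := (β i).2
        simp at hj ⊢; omega
      · intro j _ hj
        simp at hj
        rw [Nat.choose_eq_zero_of_lt (by omega)]; simp
    simp only [mon, PiLp.add_apply, h2]
    rw [Finset.prod_univ_sum, Fintype.piFinset_univ]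
    refine Finset.sum_congr rfl fun α _ => ?_
    rw [← Finset.prod_mul_distrib]
  simp only [bp, h1, tc, Finset.mul_sum, Finset.sum_mul]
  rw [Finset.sum_comm]
  refine Finset.sum_congr rfl fun α _ => Finset.sum_congr rfl fun β _ => by ring

lemma mon_smul {n r : ℕ} (α : Mi n r) (s : ℝ) (z : En n) : mon α (s • z) = s ^ dg α * mon α z := by
  simp [mon, dg, mul_pow, Finset.prod_mul_distrib, Finset.prod_pow_eq_pow_sum]

lemma bp_smul {n r : ℕ} (c : Mi n r → ℝ) (s : ℝ) (z : En n) :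
    bp c (s • z) = bp (fun α => c α * s ^ dg α) z := by
  simp [bp, mon_smul, mul_assoc]

lemma mon_cont {n r : ℕ} (α : Mi n r) : ContDiff ℝ (⊤ : ℕ∞) (mon α : En n → ℝ) := by
  unfold mon
  refine contDiff_prod fun i _ => ContDiff.pow ?_ _
  exact (EuclideanSpace.proj (𝕜 := ℝ) i : En n →L[ℝ] ℝ).contDiff

lemma bp_cont {n r : ℕ} (c : Mi n r → ℝ) : ContDiff ℝ (⊤ : ℕ∞) (bp c : En n → ℝ) := by
  unfold bp
  exact ContDiff.sum fun α _ => contDiff_const.mul (mon_cont α)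

lemma tc_cont {n r : ℕ} (c : Mi n r → ℝ) (α : Mi n r) : Continuous (fun x : En n => tc c x α) := by
  unfold tc
  fun_prop

lemma mon_le {n r : ℕ} (α : Mi n r) (z : En n) (hz : ‖z‖ ≤ 1) : |mon α z| ≤ 1 := by
  rw [mon, Finset.abs_prod]
  refine Finset.prod_le_one (fun _ _ => abs_nonneg _) fun i _ => ?_
  rw [abs_pow]
  refine pow_le_one₀ (abs_nonneg _) ?_
  have := PiLp.norm_apply_le z i
  rw [Real.norm_eq_abs] at this
  linarith

def monPoly {n r : ℕ} (c : Mi n r → ℝ) : MvPolynomial (Fin n) ℝ :=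
  ∑ α, MvPolynomial.monomial (Finsupp.equivFunOnFinite.symm fun i => (α i : ℕ)) (c α)

lemma monPoly_eval {n r : ℕ} (c : Mi n r → ℝ) (z : En n) :
    MvPolynomial.eval (fun i => z i) (monPoly c) = bp c z := by
  simp [monPoly, bp, mon, MvPolynomial.eval_monomial, Finsupp.prod_fintype]

lemma bp_inj {n r : ℕ} (c : Mi n r → ℝ) (h : ∀ z : En n, ‖z‖ ≤ 1 → bp c z = 0) : c = 0 := by
  classical
  have h0 : ∀ z : En n, bp c z = 0 := by
    intro z
    -- one variable polynomial
    let q : Polynomial ℝ := ∑ α : Mi n r, Polynomial.C (c α * mon α z) * Polynomial.X ^ dg α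
    have hq : ∀ t : ℝ, q.eval t = bp c (t • z) := by
      intro t
      simp [q, Polynomial.eval_finsetSum, bp, mon_smul]
      refine Finset.sum_congr rfl fun _ _ => by ring
    have : q = 0 := by
      refine Polynomial.eq_zero_of_infinite_isRoot q ?_
      refine Set.Infinite.mono (s := Set.Ioo (0:ℝ) (1 / (‖z‖ + 1))) ?_ (Set.Ioo_infinite (by positivity))
      intro t ht
      show q.eval t = 0
      rw [hq]
      apply h
      rw [norm_smul, Real.norm_eq_abs, abs_of_pos ht.1]
      have h1 : 0 < ‖z‖ + 1 := by positivity
      have h2 : t * (‖z‖ + 1) < 1 := by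
        have := ht.2; rwa [lt_div_iff₀ h1] at this
      nlinarith [ht.1]
    have h1 := hq 1
    rw [this] at h1; simpa using h1.symm
  have hP : monPoly c = 0 := by
    apply MvPolynomial.funext
    intro x
    have := h0 (WithLp.toLp 2 x)
    rw [← monPoly_eval] at this
    simpa using this
  ext α
  have h2 : (monPoly c).coeff (Finsupp.equivFunOnFinite.symm fun i => (α i : ℕ)) = c α := by
    simp only [monPoly, MvPolynomial.coeff_sum, MvPolynomial.coeff_monomial]
    rw [Finset.sum_eq_single α]
    · simp
    · intro β _ hβ
      rw [if_neg]
      intro hh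
      apply hβ
      ext i
      have := DFunLike.congr_fun hh i
      simpa using this
    · simp
  rw [← h2, hP]; simp

lemma coeff_bound (n r : ℕ) : ∃ K : ℝ, 1 ≤ K ∧ ∀ (c : Mi n r → ℝ) (A : ℝ),
    (∀ z : En n, ‖z‖ ≤ 1 → |bp c z| ≤ A) → ∀ α, |c α| ≤ K * A := by
  classical
  let T : (Mi n r → ℝ) →ₗ[ℝ] C(closedBall (0 : En n) 1, ℝ) :=
    { toFun := fun c => ⟨fun z => bp c z.1, (bp_cont c).continuous.comp continuous_subtype_val⟩
      map_add' := by intro a b; ext z; simp [bp, add_mul, Finset.sum_add_distrib]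
      map_smul' := by intro a b; ext z; simp [bp, Finset.mul_sum, mul_assoc] }
  have hker : LinearMap.ker T = ⊥ := by
    rw [LinearMap.ker_eq_bot']
    intro c hc
    apply bp_inj
    intro z hz
    have := DFunLike.congr_fun hc ⟨z, by simpa using hz⟩
    simpa [T] using this
  obtain ⟨K, hK, hT⟩ := T.exists_antilipschitzWith hker
  refine ⟨max K 1, le_max_right _ _, fun c A hA α => ?_⟩
  have hA0 : 0 ≤ A := (abs_nonneg _).trans (hA 0 (by simp))
  have h1 := hT.le_mul_dist c 0
  simp only [dist_zero_right, map_zero] at h1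
  have h2 : ‖T c‖ ≤ A := by
    rw [ContinuousMap.norm_le _ hA0]
    intro z
    exact hA z.1 (mem_closedBall_zero_iff.1 z.2)
  have h3 := norm_le_pi_norm c α
  rw [Real.norm_eq_abs] at h3
  calc |c α| ≤ K * ‖T c‖ := h3.trans h1
    _ ≤ max K 1 * A := by gcongr; exact le_max_left _ _

/-- bound on the derivative in the unit ball -/
lemma grad_bound (n r : ℕ) : ∃ K : ℝ, 1 ≤ K ∧ ∀ (c : Mi n r → ℝ) (A : ℝ),
    (∀ α, |c α| ≤ A) → ∀ z : En n, ‖z‖ ≤ 1 → ‖fderiv ℝ (bp c) z‖ ≤ K * A := by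
  classical
  have h : ∀ α : Mi n r, ∃ K : ℝ, ∀ z : En n, z ∈ closedBall (0 : En n) 1 → ‖fderiv ℝ (mon α) z‖ ≤ K := by
    intro α
    exact (isCompact_closedBall (0 : En n) 1).exists_bound_of_continuousOn
      (((mon_cont α).continuous_fderiv (by simp)).continuousOn)
  choose K hK using h
  refine ⟨1 + ∑ α, |K α|, by simpa using Finset.sum_nonneg fun _ _ => abs_nonneg _, fun c A hA z hz => ?_⟩
  have hA0 : 0 ≤ A := (abs_nonneg _).trans (hA 0)
  have hz' : z ∈ closedBall (0 : En n) 1 := by simpa using hz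
  have h1 : fderiv ℝ (bp c) z = ∑ α, c α • fderiv ℝ (mon α) z := by
    have : HasFDerivAt (bp c) (∑ α, c α • fderiv ℝ (mon α) z) z := by
      unfold bp
      refine HasFDerivAt.fun_sum fun α _ => ?_
      exact (((mon_cont α).differentiable (by simp)) z).hasFDerivAt.const_mul (c α)
    exact this.fderiv
  rw [h1]
  calc _ ≤ ∑ α, ‖c α • fderiv ℝ (mon α) z‖ := norm_sum_le _ _
    _ ≤ ∑ α, A * |K α| := by
        refine Finset.sum_le_sum fun α _ => ?_
        rw [norm_smul, Real.norm_eq_abs]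
        exact mul_le_mul (hA α) ((hK α z hz').trans (le_abs_self _)) (norm_nonneg _) hA0
    _ ≤ _ := by rw [← Finset.mul_sum]; nlinarith


lemma mon_zero_deg {n r : ℕ} (α : Mi n r) (h : dg α = 0) (z : En n) : mon α z = 1 := by
  have : ∀ i, (α i : ℕ) = 0 := by
    intro i
    have := (Finset.sum_eq_zero_iff.1 h) i (Finset.mem_univ i)
    exact this
  simp [mon, this]

lemma mon_at_zero {n r : ℕ} (α : Mi n r) (h : dg α ≠ 0) : mon α (0 : En n) = 0 := by
  have := mon_smul α 0 (0 : En n)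
  simpa [h] using this

lemma dg_le {n r : ℕ} (α : Mi n r) : dg α ≤ n * r := by
  unfold dg
  calc ∑ i, (α i : ℕ) ≤ ∑ _i : Fin n, r := Finset.sum_le_sum fun i _ => by have := (α i).2; omega
    _ = n * r := by simp

/-- rescaled Taylor coefficients without the constant term -/
def dc {n r : ℕ} (c : Mi n r → ℝ) (x : En n) (s : ℝ) (α : Mi n r) : ℝ :=
  if dg α = 0 then 0 else tc c x α * s ^ dg α

lemma bp_dc {n r : ℕ} (c : Mi n r → ℝ) (x z : En n) (s : ℝ) :
    bp c (x + s • z) - bp c x = bp (dc c x s) z := by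
  have h1 : bp c x = bp (tc c x) 0 := by rw [← bp_add]; simp
  rw [bp_add, h1, bp_smul]
  simp only [bp, ← Finset.sum_sub_distrib]
  refine Finset.sum_congr rfl fun α _ => ?_
  by_cases h : dg α = 0
  · simp [dc, h, mon_zero_deg]
  · simp [dc, h, mon_at_zero]

/-- number of multi-indices -/
def cN (n r : ℕ) : ℝ := (Fintype.card (Mi n r) : ℝ)

lemma one_le_cN (n r : ℕ) : 1 ≤ cN n r := by
  unfold cN
  exact_mod_cast Fintype.card_pos

lemma bp_le {n r : ℕ} (c : Mi n r → ℝ) (B : ℝ) (h : ∀ α, |c α| ≤ B) (z : En n) (hz : ‖z‖ ≤ 1) :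
    |bp c z| ≤ cN n r * B := by
  have hB : 0 ≤ B := (abs_nonneg _).trans (h 0)
  calc |bp c z| ≤ ∑ α, |c α * mon α z| := Finset.abs_sum_le_sum_abs _ _
    _ ≤ ∑ _α : Mi n r, B := by
        refine Finset.sum_le_sum fun α _ => ?_
        rw [abs_mul]
        calc _ ≤ B * 1 := mul_le_mul (h α) (mon_le α z hz) (abs_nonneg _) hB
          _ = B := mul_one B
    _ = _ := by simp [cN]

/-- constant for coefficient bounds -/
def cK (n r : ℕ) : ℝ := (coeff_bound n r).choose

lemma one_le_cK (n r : ℕ) : 1 ≤ cK n r := (coeff_bound n r).choose_spec.1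

lemma dc_bound {n r : ℕ} (c : Mi n r → ℝ) (x : En n) (s A : ℝ) (hs : 0 < s)
    (h : ∀ w : En n, ‖w‖ ≤ s → |bp c (x + w) - bp c x| ≤ A) (α : Mi n r) :
    |dc c x s α| ≤ cK n r * A := by
  refine (coeff_bound n r).choose_spec.2 (dc c x s) A (fun z hz => ?_) α
  rw [← bp_dc]
  apply h
  rw [norm_smul, Real.norm_eq_abs, abs_of_pos hs]
  nlinarith

lemma exists_smul {n : ℕ} (w : En n) (s : ℝ) (hs : 0 < s) (hw : ‖w‖ ≤ s) :
    ∃ z : En n, ‖z‖ ≤ 1 ∧ w = s • z := by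
  refine ⟨s⁻¹ • w, ?_, ?_⟩
  · rw [norm_smul, norm_inv, Real.norm_eq_abs, abs_of_pos hs, inv_mul_le_iff₀ hs]; simpa using hw
  · rw [smul_smul, mul_inv_cancel₀ hs.ne', one_smul]

lemma grow3 {n r : ℕ} (c : Mi n r → ℝ) (x : En n) (s A : ℝ) (hs : 0 < s)
    (h : ∀ w : En n, ‖w‖ ≤ s → |bp c (x + w) - bp c x| ≤ A) (w : En n) (hw : ‖w‖ ≤ 3 * s) :
    |bp c (x + w) - bp c x| ≤ cN n r * (3 ^ (n * r) * (cK n r * A)) := by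
  obtain ⟨z, hz, rfl⟩ := exists_smul w (3 * s) (by positivity) hw
  rw [bp_dc]
  have hA : 0 ≤ A := (abs_nonneg _).trans (h 0 (by simpa using hs.le))
  have hK := one_le_cK n r
  refine bp_le _ _ (fun α => ?_) z hz
  have h1 := dc_bound c x s A hs h α
  by_cases h0 : dg α = 0
  · simp only [dc, h0, if_true, abs_zero]; positivity
  · simp only [dc, h0, if_false] at h1 ⊢
    rw [mul_pow, mul_left_comm, abs_mul, abs_of_nonneg (by positivity : (0:ℝ) ≤ 3 ^ dg α)]
    gcongr
    · norm_num
    · exact dg_le α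

def cG (n r : ℕ) : ℝ := (grad_bound n r).choose

lemma one_le_cG (n r : ℕ) : 1 ≤ cG n r := (grad_bound n r).choose_spec.1

lemma grad_osc {n r : ℕ} (c : Mi n r → ℝ) (x : En n) (s A : ℝ) (hs : 0 < s)
    (h : ∀ w : En n, ‖w‖ ≤ s → |bp c (x + w) - bp c x| ≤ A) (w : En n) (hw : ‖w‖ ≤ s) :
    ‖fderiv ℝ (bp c) (x + w)‖ ≤ cG n r * (cK n r * A) / s := by
  obtain ⟨z, hz, rfl⟩ := exists_smul w s hs hw
  have h1 := (grad_bound n r).choose_spec.2 (dc c x s) (cK n r * A) (fun α => dc_bound c x s A hs h α) z hz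
  have h2 : fderiv ℝ (bp (dc c x s)) z = s • fderiv ℝ (bp c) (x + s • z) := by
    have e : bp (dc c x s) = fun z => bp c (x + s • z) - bp c x := by
      ext z; rw [bp_dc]
    have hd : HasFDerivAt (bp c) (fderiv ℝ (bp c) (x + s • z)) (x + s • z) :=
      ((bp_cont c).differentiable (by simp) _).hasFDerivAt
    have hl : HasFDerivAt (fun z : En n => x + s • z) (s • ContinuousLinearMap.id ℝ (En n)) z :=
      ((hasFDerivAt_id z).const_smul s).const_add x
    have h3 := (hd.comp z hl).sub_const (bp c x)
    rw [e]
    refine (h3.fderiv).trans ?_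
    ext v; simp
  rw [h2, norm_smul, Real.norm_eq_abs, abs_of_pos hs] at h1
  rw [le_div_iff₀ hs, mul_comm]
  exact h1

/-- the scale function -/
def mw {n r : ℕ} (c : Mi n r → ℝ) (τ : ℝ) (x : En n) : ℝ :=
  ∑ α : Mi n r, if dg α = 0 then 0 else (τ * |tc c x α|) ^ ((1 : ℝ) / (dg α))

lemma mw_cont {n r : ℕ} (c : Mi n r → ℝ) (τ : ℝ) : Continuous (mw c τ) := by
  unfold mw
  refine continuous_finsetSum _ fun α _ => ?_
  split_ifs
  · exact continuous_const
  · have := tc_cont c α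
    refine Continuous.rpow_const (by fun_prop) fun x => Or.inr (by positivity)

lemma mw_term_nonneg {n r : ℕ} (c : Mi n r → ℝ) (τ : ℝ) (hτ : 0 ≤ τ) (x : En n) (α : Mi n r) :
    0 ≤ (if dg α = 0 then 0 else (τ * |tc c x α|) ^ ((1 : ℝ) / (dg α))) := by
  split_ifs
  · exact le_rfl
  · positivity

lemma mw_nonneg {n r : ℕ} (c : Mi n r → ℝ) (τ : ℝ) (hτ : 0 ≤ τ) (x : En n) : 0 ≤ mw c τ x :=
  Finset.sum_nonneg fun α _ => mw_term_nonneg c τ hτ x α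

lemma tc_le {n r : ℕ} (c : Mi n r → ℝ) (τ : ℝ) (hτ : 0 ≤ τ) (x : En n) (α : Mi n r) (h : dg α ≠ 0) :
    τ * |tc c x α| ≤ mw c τ x ^ dg α := by
  have h1 := Finset.single_le_sum (f := fun α : Mi n r => if dg α = 0 then 0 else (τ * |tc c x α|) ^ ((1 : ℝ) / (dg α)))
    (fun α _ => mw_term_nonneg c τ hτ x α) (Finset.mem_univ α)
  simp only [h, if_false] at h1
  have h0 : 0 ≤ τ * |tc c x α| := by positivity
  calc τ * |tc c x α| = ((τ * |tc c x α|) ^ ((1 : ℝ) / (dg α))) ^ dg α := by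
        rw [one_div, Real.rpow_inv_natCast_pow h0 h]
    _ ≤ _ := by
        refine pow_le_pow_left₀ (by positivity) h1 _

lemma mw_le {n r : ℕ} (c : Mi n r → ℝ) (τ : ℝ) (hτ : 0 ≤ τ) (x : En n) (t : ℝ) (ht : 0 ≤ t)
    (h : ∀ α : Mi n r, dg α ≠ 0 → τ * |tc c x α| ≤ t ^ dg α) : mw c τ x ≤ cN n r * t := by
  have : mw c τ x ≤ ∑ _α : Mi n r, t := by
    refine Finset.sum_le_sum fun α _ => ?_
    split_ifs with h0
    · exact ht
    · rw [one_div]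
      calc _ ≤ (t ^ dg α) ^ ((dg α : ℝ)⁻¹) := Real.rpow_le_rpow (by positivity) (h α h0) (by positivity)
        _ = t := Real.pow_rpow_inv_natCast ht h0
  simpa [cN] using this

/-- upper bound of the oscillation -/
lemma osc_upper {n r : ℕ} (c : Mi n r → ℝ) (τ : ℝ) (hτ : 0 ≤ τ) (x w : En n) (hm : 0 < mw c τ x)
    (R : ℝ) (hR : 1 ≤ R) (hw : ‖w‖ * mw c τ x ≤ R) :
    τ * |bp c (x + w) - bp c x| ≤ cN n r * R ^ (n * r) := by
  obtain ⟨z, hz, rfl⟩ := exists_smul w (R / mw c τ x) (by positivity) (by rwa [le_div_iff₀ hm])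
  rw [bp_dc]
  have h1 : τ * |bp (dc c x (R / mw c τ x)) z| = |bp (fun α => τ * dc c x (R / mw c τ x) α) z| := by
    rw [← abs_of_nonneg hτ, ← abs_mul, abs_of_nonneg hτ]
    simp [bp, Finset.mul_sum, mul_assoc]
  rw [h1]
  refine bp_le _ _ (fun α => ?_) z hz
  by_cases h0 : dg α = 0
  · simp only [dc, h0, if_true, mul_zero, abs_zero]; positivity
  · simp only [dc, h0, if_false]
    rw [abs_mul, abs_mul, abs_of_nonneg hτ, abs_of_nonneg (by positivity : (0:ℝ) ≤ (R / mw c τ x) ^ dg α), ← mul_assoc]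
    calc _ ≤ mw c τ x ^ dg α * (R / mw c τ x) ^ dg α := by
          gcongr; exact tc_le c τ hτ x α h0
      _ = R ^ dg α := by rw [← mul_pow, mul_div_cancel₀ _ hm.ne']
      _ ≤ _ := pow_le_pow_right₀ hR (dg_le α)

/-- lower bound of the oscillation -/
lemma osc_lower {n r : ℕ} (c : Mi n r → ℝ) (τ : ℝ) (hτ : 0 ≤ τ) (x : En n) (hm : 0 < mw c τ x)
    (R : ℝ) (hR : 2 * cN n r ≤ R) (A : ℝ)
    (hA : ∀ w : En n, ‖w‖ ≤ R / mw c τ x → |bp c (x + w) - bp c x| ≤ A) :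
    R / (2 * cN n r * cK n r) ≤ τ * A := by
  have hN := one_le_cN n r
  have hK := one_le_cK n r
  by_contra hcon
  push Not at hcon
  have hRp : 0 < R := by linarith
  have key : mw c τ x ≤ cN n r * (mw c τ x / (2 * cN n r)) := by
    refine mw_le c τ hτ x _ (by positivity) fun α h0 => ?_
    have h1 := dc_bound c x (R / mw c τ x) A (by positivity) hA α
    simp only [dc, h0, if_false] at h1
    rw [abs_mul, abs_of_nonneg (by positivity : (0:ℝ) ≤ (R / mw c τ x) ^ dg α)] at h1
    have h2 : τ * |tc c x α| * (R / mw c τ x) ^ dg α ≤ R / (2 * cN n r) := by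
      calc _ = τ * (|tc c x α| * (R / mw c τ x) ^ dg α) := by ring
        _ ≤ τ * (cK n r * A) := by gcongr
        _ = cK n r * (τ * A) := by ring
        _ ≤ cK n r * (R / (2 * cN n r * cK n r)) := by gcongr
        _ = _ := by field_simp
    have h3 : R / (2 * cN n r) ≤ (R / (2 * cN n r)) ^ dg α := by
      refine le_self_pow₀ ?_ h0
      rw [le_div_iff₀ (by positivity)]; linarith
    have h4 : (R / (2 * cN n r)) ^ dg α = (mw c τ x / (2 * cN n r)) ^ dg α * (R / mw c τ x) ^ dg α := by
      rw [← mul_pow]; congr 1; field_simp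
    have h5 := h2.trans h3
    rw [h4] at h5
    exact le_of_mul_le_mul_right h5 (by positivity)
  have : cN n r * (mw c τ x / (2 * cN n r)) = mw c τ x / 2 := by field_simp
  linarith

/-- comparison factor -/
def cB (n r : ℕ) (R : ℝ) : ℝ := cN n r * (cK n r * (2 * (cN n r * (2 * R) ^ (n * r))))

lemma one_le_cB (n r : ℕ) (R : ℝ) (hR : 1 ≤ R) : 1 ≤ cB n r R := by
  have hN := one_le_cN n r
  have hK := one_le_cK n r
  have h1 : 1 ≤ (2 * R) ^ (n * r) := one_le_pow₀ (by linarith)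
  have h2 : 1 ≤ cN n r * (2 * R) ^ (n * r) := one_le_mul_of_one_le_of_one_le hN h1
  have h3 : 1 ≤ 2 * (cN n r * (2 * R) ^ (n * r)) := by linarith
  exact one_le_mul_of_one_le_of_one_le hN (one_le_mul_of_one_le_of_one_le hK h3)

lemma mw_compare1 {n r : ℕ} (c : Mi n r → ℝ) (τ : ℝ) (hτ : 0 < τ) (x y : En n) (hm : 0 < mw c τ x)
    (R : ℝ) (hR : 1 ≤ R) (hxy : ‖y - x‖ * mw c τ x ≤ R) :
    mw c τ y ≤ cB n r R * mw c τ x := by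
  have hN := one_le_cN n r
  have hK := one_le_cK n r
  set m := mw c τ x with hmdef
  have hD : 1 ≤ (2 * R) ^ (n * r) := one_le_pow₀ (by linarith)
  set A := 2 * (cN n r * (2 * R) ^ (n * r)) with hAdef
  have hA1 : 1 ≤ A := by nlinarith
  have hosc : ∀ w : En n, ‖w‖ ≤ 1 / m → |bp c (y + w) - bp c y| ≤ A / τ := by
    intro w hw
    rw [le_div_iff₀ hm] at hw
    have h1 := osc_upper c τ hτ.le x (y - x + w) hm (2 * R) (by linarith) (by
      calc _ ≤ (‖y - x‖ + ‖w‖) * m := by gcongr; exact norm_add_le _ _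
        _ ≤ 2 * R := by rw [add_mul]; linarith)
    have h2 := osc_upper c τ hτ.le x (y - x) hm (2 * R) (by linarith) (by linarith)
    have e1 : x + (y - x + w) = y + w := by abel
    have e2 : x + (y - x) = y := by abel
    rw [e1] at h1; rw [e2] at h2
    rw [le_div_iff₀ hτ]
    have h3 : |bp c (y + w) - bp c y| ≤ |bp c (y + w) - bp c x| + |bp c y - bp c x| := by
      have : bp c (y + w) - bp c y = (bp c (y + w) - bp c x) - (bp c y - bp c x) := by ring
      rw [this]; exact abs_sub _ _
    nlinarith
  have : mw c τ y ≤ cN n r * (cK n r * A * m) := by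
    refine mw_le c τ hτ.le y _ (by positivity) fun α h0 => ?_
    have h1 := dc_bound c y (1 / m) (A / τ) (by positivity) hosc α
    simp only [dc, h0, if_false] at h1
    rw [abs_mul, abs_of_nonneg (by positivity : (0:ℝ) ≤ (1 / m) ^ dg α)] at h1
    have h2 : τ * |tc c y α| * (1 / m) ^ dg α ≤ cK n r * A := by
      calc _ = τ * (|tc c y α| * (1 / m) ^ dg α) := by ring
        _ ≤ τ * (cK n r * (A / τ)) := by gcongr
        _ = _ := by field_simp
    have h3 : cK n r * A ≤ (cK n r * A) ^ dg α :=
      le_self_pow₀ (one_le_mul_of_one_le_of_one_le hK hA1) h0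
    have h4 : (cK n r * A) ^ dg α = (cK n r * A * m) ^ dg α * (1 / m) ^ dg α := by
      rw [← mul_pow]; congr 1; field_simp
    have h5 := h2.trans h3
    rw [h4] at h5
    exact le_of_mul_le_mul_right h5 (by positivity)
  calc _ ≤ _ := this
    _ = _ := by rw [cB]; ring

lemma mw_compare2 {n r : ℕ} (c : Mi n r → ℝ) (τ : ℝ) (hτ : 0 < τ) (x y : En n) (hm : 0 < mw c τ x)
    (hm' : 0 < mw c τ y)
    (R : ℝ) (hR : 1 ≤ R) (hxy : ‖y - x‖ * mw c τ x ≤ R) :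
    mw c τ x ≤ cB n r R * mw c τ y := by
  rcases le_total (mw c τ x) (mw c τ y) with h | h
  · have := one_le_cB n r R hR
    nlinarith
  · refine mw_compare1 c τ hτ y x hm' R hR ?_
    rw [norm_sub_rev]
    exact (mul_le_mul_of_nonneg_left h (norm_nonneg _)).trans hxy

lemma grad_mw {n r : ℕ} (c : Mi n r → ℝ) (τ : ℝ) (hτ : 0 < τ) (x : En n) (hm : 0 < mw c τ x) :
    τ * ‖fderiv ℝ (bp c) x‖ ≤ cG n r * (cK n r * cN n r) * mw c τ x := by
  have h := grad_osc c x (1 / mw c τ x) (cN n r / τ) (by positivity) (fun w hw => by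
    rw [le_div_iff₀ hm] at hw
    have := osc_upper c τ hτ.le x w hm 1 le_rfl hw
    rw [le_div_iff₀ hτ]; simpa [mul_comm] using this) 0 (by simp; positivity)
  rw [add_zero] at h
  calc _ ≤ τ * (cG n r * (cK n r * (cN n r / τ)) / (1 / mw c τ x)) := by gcongr
    _ = _ := by field_simp

lemma mw_pos {n r : ℕ} (c : Mi n r → ℝ) (hne : ∃ a b : En n, bp c a ≠ bp c b) (τ : ℝ) (hτ : 0 < τ) (x : En n) :
    0 < mw c τ x := by
  by_contra hcon
  have h0 : mw c τ x = 0 := le_antisymm (not_lt.1 hcon) (mw_nonneg c τ hτ.le x)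
  have h1 : ∀ α : Mi n r, dg α ≠ 0 → tc c x α = 0 := by
    intro α h
    have := tc_le c τ hτ.le x α h
    rw [h0, zero_pow h] at this
    have h2 : |tc c x α| ≤ 0 := by
      by_contra h3; push Not at h3; nlinarith [mul_pos hτ h3]
    simpa using h2
  have h2 : ∀ z : En n, bp c z = bp c x := by
    intro z
    have := bp_dc c x (z - x) 1
    have h3 : dc c x 1 = 0 := by
      ext α; by_cases h : dg α = 0
      · simp [dc, h]
      · simp [dc, h1 α h]
    rw [h3] at this
    simp [bp] at this
    simp only [bp]; linarith
  obtain ⟨a, b, hab⟩ := hne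
  exact hab ((h2 a).trans (h2 b).symm)

lemma mw_tau {n r : ℕ} (c : Mi n r → ℝ) (τ : ℝ) (hτ : 1 ≤ τ) (x : En n) :
    τ ^ ((1 : ℝ) / ((n * r : ℕ) : ℝ)) * mw c 1 x ≤ mw c τ x := by
  unfold mw
  rw [Finset.mul_sum]
  refine Finset.sum_le_sum fun α _ => ?_
  by_cases h : dg α = 0
  · simp [h]
  · simp only [h, if_false]
    rw [one_mul, Real.mul_rpow (by linarith) (abs_nonneg _)]
    gcongr
    exact dg_le α



lemma second_min (h h1 : ℝ → ℝ) (h2 : ℝ) (hd : ∀ t, HasDerivAt h (h1 t) t) (hd2 : HasDerivAt h1 h2 0)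
    (hmin : IsLocalMin h 0) : h1 0 = 0 ∧ 0 ≤ h2 := by
  have h10 : h1 0 = 0 := hmin.hasDerivAt_eq_zero (hd 0)
  refine ⟨h10, ?_⟩
  by_contra hneg
  push Not at hneg
  have e : deriv h = h1 := funext fun t => (hd t).deriv
  have hmax : IsLocalMax h 0 := by
    apply isLocalMax_of_deriv_deriv_neg
    · rw [e, hd2.deriv]; exact hneg
    · rw [e]; exact h10
    · exact (hd 0).continuousAt
  have hconst : h =ᶠ[𝓝 0] fun _ => h 0 := by
    filter_upwards [hmin, hmax] with t a b
    exact le_antisymm b a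
  have h1z : h1 =ᶠ[𝓝 0] fun _ => 0 := by
    have := hconst.eventually_nhds
    filter_upwards [this] with t ht
    have h3 : HasDerivAt h 0 t := (hasDerivAt_const t (h 0)).congr_of_eventuallyEq ht
    exact (hd t).unique h3
  have : h2 = 0 := hd2.unique ((hasDerivAt_const (0:ℝ) (0:ℝ)).congr_of_eventuallyEq h1z)
  linarith

lemma vec_sum {n : ℕ} (v : En n) : v = ∑ j, v j • (EuclideanSpace.single j (1:ℝ) : En n) := by
  have := (EuclideanSpace.basisFun (Fin n) ℝ).sum_repr v
  simpa using this.symm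

lemma fderiv_coord {n : ℕ} (f : En n → ℝ) (y v : En n) : fderiv ℝ f y v = ∑ j, v j * pd1 n j f y := by
  conv_lhs => rw [vec_sum v]
  simp [map_sum, pd1]

lemma pd1_smooth {n : ℕ} (j : Fin n) {f : En n → ℝ} (hf : ContDiff ℝ (⊤ : ℕ∞) f) : ContDiff ℝ (⊤ : ℕ∞) (pd1 n j f) := by
  have h : ContDiff ℝ (⊤ : ℕ∞) (fderiv ℝ f) := hf.fderiv_right (by simp)
  exact h.clm_apply contDiff_const

lemma line_deriv1 {n : ℕ} {f : En n → ℝ} (hf : ContDiff ℝ (⊤ : ℕ∞) f) (z v : En n) (t : ℝ) :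
    HasDerivAt (fun t : ℝ => f (z + t • v)) (fderiv ℝ f (z + t • v) v) t := by
  have h1 : HasFDerivAt f (fderiv ℝ f (z + t • v)) (z + t • v) := (hf.differentiable (by simp) _).hasFDerivAt
  have h2 : HasDerivAt (fun t : ℝ => z + t • v) v t := by
    simpa using ((hasDerivAt_id t).smul_const v).const_add z
  exact h1.comp_hasDerivAt t h2

lemma line_deriv2 {n : ℕ} {f : En n → ℝ} (hf : ContDiff ℝ (⊤ : ℕ∞) f) (z v : En n) :
    HasDerivAt (fun t : ℝ => fderiv ℝ f (z + t • v) v) (∑ j, v j * ∑ i, v i * hessM n f z i j) 0 := by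
  simp only [fderiv_coord f _ v]
  refine HasDerivAt.fun_sum fun j _ => HasDerivAt.const_mul _ ?_
  have h := line_deriv1 (pd1_smooth j hf) z v 0
  rw [fderiv_coord] at h
  simpa [hessM] using h

lemma hess_min {n : ℕ} {p : En n → ℝ} (hp : ContDiff ℝ (⊤ : ℕ∞) p) (a z : En n) (b ε : ℝ)
    (hmin : IsLocalMin (fun y => p y - ε * Real.exp (-b * ‖y - a‖ ^ 2)) z) (v : En n) :
    fderiv ℝ p z v = -(2 * b * ε * Real.exp (-b * ‖z - a‖ ^ 2)) * inner ℝ (z - a) v ∧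
    ε * Real.exp (-b * ‖z - a‖ ^ 2) * (4 * b ^ 2 * (inner ℝ (z - a) v) ^ 2 - 2 * b * ‖v‖ ^ 2) ≤
      ∑ j, v j * ∑ i, v i * hessM n p z i j := by
  set d := z - a with hd
  set D := inner ℝ d v with hD
  have hn : ∀ t : ℝ, ‖z + t • v - a‖ ^ 2 = ‖d‖ ^ 2 + 2 * t * D + t ^ 2 * ‖v‖ ^ 2 := by
    intro t
    have : z + t • v - a = d + t • v := by rw [hd]; abel
    rw [this, norm_add_sq_real, inner_smul_right, norm_smul, mul_pow, Real.norm_eq_abs, sq_abs]; ring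
  let g : ℝ → ℝ := fun t => Real.exp (-b * (‖d‖ ^ 2 + 2 * t * D + t ^ 2 * ‖v‖ ^ 2))
  have hpoly : ∀ t : ℝ, HasDerivAt (fun t : ℝ => -b * (‖d‖ ^ 2 + 2 * t * D + t ^ 2 * ‖v‖ ^ 2))
      (-b * (2 * D + 2 * t * ‖v‖ ^ 2)) t := by
    intro t
    have h1 : HasDerivAt (fun t : ℝ => 2 * t * D) (2 * D) t := by
      simpa using ((hasDerivAt_id t).const_mul 2).mul_const D
    have h2 : HasDerivAt (fun t : ℝ => t ^ 2 * ‖v‖ ^ 2) (2 * t * ‖v‖ ^ 2) t := by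
      simpa using (hasDerivAt_pow 2 t).mul_const (‖v‖ ^ 2)
    simpa [add_assoc] using ((h1.add h2).const_add (‖d‖ ^ 2)).const_mul (-b)
  have hg : ∀ t, HasDerivAt g (g t * (-b * (2 * D + 2 * t * ‖v‖ ^ 2))) t := fun t => (hpoly t).exp
  have hlin : HasDerivAt (fun t : ℝ => -b * (2 * D + 2 * t * ‖v‖ ^ 2)) (-b * (2 * ‖v‖ ^ 2)) 0 := by
    have h1 : HasDerivAt (fun t : ℝ => 2 * t * ‖v‖ ^ 2) (2 * ‖v‖ ^ 2) 0 := by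
      simpa using ((hasDerivAt_id (0:ℝ)).const_mul 2).mul_const (‖v‖ ^ 2)
    exact (h1.const_add (2 * D)).const_mul (-b)
  have hg2 := (hg 0).mul hlin
  have key := second_min (fun t => p (z + t • v) - ε * g t)
    (fun t => fderiv ℝ p (z + t • v) v - ε * (g t * (-b * (2 * D + 2 * t * ‖v‖ ^ 2)))) _
    (fun t => (line_deriv1 hp z v t).sub ((hg t).const_mul ε))
    ((line_deriv2 hp z v).sub (hg2.const_mul ε)) (by
      have hc : ContinuousAt (fun t : ℝ => z + t • v) 0 := by fun_prop
      have hm : Tendsto (fun t : ℝ => z + t • v) (𝓝 0) (𝓝 z) := by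
        have := hc.tendsto; simpa using this
      have := hm.eventually hmin
      unfold IsLocalMin IsMinFilter
      filter_upwards [this] with t ht
      simp only [hn t] at ht
      have e0 : g 0 = Real.exp (-b * ‖z - a‖ ^ 2) := by simp [g, hd]
      simp only [zero_smul, add_zero, e0]
      exact ht)
  have e0 : g 0 = Real.exp (-b * ‖d‖ ^ 2) := by simp [g]
  obtain ⟨k1, k2⟩ := key
  rw [e0] at k2
  simp only [e0, zero_smul, add_zero, mul_zero, zero_mul] at k1
  refine ⟨by linarith, ?_⟩
  simp only [mul_zero, zero_mul, add_zero] at k2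
  nlinarith [k2]

lemma hess_symm {n : ℕ} {p : En n → ℝ} (hp : ContDiff ℝ (⊤ : ℕ∞) p) (z : En n) : (hessM n p z).IsHermitian := by
  have hs : IsSymmSndFDerivAt ℝ p z := hp.contDiffAt.isSymmSndFDerivAt (by simp only [minSmoothness_of_isRCLikeNormedField]; exact WithTop.coe_le_coe.2 (le_top : (2 : ℕ∞) ≤ ⊤))
  have h : ∀ i j, hessM n p z i j = fderiv ℝ (fderiv ℝ p) z (EuclideanSpace.single i 1) (EuclideanSpace.single j 1) := by
    intro i j
    have h1 : HasFDerivAt (fderiv ℝ p) (fderiv ℝ (fderiv ℝ p) z) z := by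
      have h : ContDiff ℝ (⊤ : ℕ∞) (fderiv ℝ p) := hp.fderiv_right (by simp)
      exact (h.differentiable (by simp) z).hasFDerivAt
    have h2 := h1.clm_apply (hasFDerivAt_const (EuclideanSpace.single j (1:ℝ) : En n) z)
    have h3 : hessM n p z i j = fderiv ℝ (fun y => fderiv ℝ p y (EuclideanSpace.single j 1)) z (EuclideanSpace.single i 1) := rfl
    rw [h3, h2.fderiv]; simp
  ext i j
  simp only [Matrix.conjTranspose_apply, star_trivial, h]
  exact hs _ _

lemma hopf_contra {n : ℕ} {p : En n → ℝ} (hp : ContDiff ℝ (⊤ : ℕ∞) p) (a z : En n) (b ε C : ℝ)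
    (hb : 0 < b) (hε : 0 < ε) (hC : 0 < C) (hCε : C * ε ≤ 1 / 2)
    (hmin : IsLocalMin (fun y => p y - ε * Real.exp (-b * ‖y - a‖ ^ 2)) z)
    (hloc : lamPos n p z ≤ C * (lamNeg n p z + ‖gradient p z‖ ^ 2)) :
    b * ‖z - a‖ ^ 2 ≤ n * (1 + C) := by
  have key := hess_min hp a z b ε hmin
  set E := Real.exp (-b * ‖z - a‖ ^ 2) with hE
  have hE0 : 0 < E := Real.exp_pos _
  have hE1 : E ≤ 1 := by
    rw [hE, Real.exp_le_one_iff]; nlinarith [sq_nonneg ‖z - a‖]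
  set d := z - a with hd
  have hsym := hess_symm hp z
  have heig : hessEig n p z = hsym.eigenvalues := by unfold hessEig; rw [dif_pos hsym]
  -- lower bound for eigenvalues
  have hlow : ∀ j, -(2 * b * ε * E) ≤ hessEig n p z j := by
    intro j
    rw [heig]
    set e : En n := hsym.eigenvectorBasis j
    have h1 : hsym.eigenvalues j = ∑ i, e i * ∑ k, e k * hessM n p z k i := by
      rw [hsym.eigenvalues_eq j]
      simp only [dotProduct, Matrix.mulVec, RCLike.re_to_real, Pi.star_apply, star_trivial]
      refine Finset.sum_congr rfl fun i _ => ?_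
      congr 1
      refine Finset.sum_congr rfl fun k _ => ?_
      have : hessM n p z i k = hessM n p z k i := by
        have := hsym.apply k i; simpa using this
      rw [this, mul_comm]
    rw [h1]
    have h2 := (key e).2
    have h3 : ‖e‖ = 1 := hsym.eigenvectorBasis.orthonormal.1 j
    rw [h3] at h2
    have h4 : 0 ≤ ε * E * (4 * b ^ 2 * (inner ℝ d e) ^ 2) := by positivity
    nlinarith
  have hneg : lamNeg n p z ≤ n * (2 * b * ε * E) := by
    unfold lamNeg
    calc _ ≤ ∑ _j : Fin n, 2 * b * ε * E := Finset.sum_le_sum fun j _ => by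
          apply max_le
          · linarith [hlow j]
          · positivity
      _ = _ := by simp
  have hneg0 : 0 ≤ lamNeg n p z := Finset.sum_nonneg fun _ _ => le_max_right _ _
  have htr : lamPos n p z - lamNeg n p z = ∑ i, hessM n p z i i := by
    have h1 : ∑ i, hessM n p z i i = ∑ j, hessEig n p z j := by
      rw [heig]
      have := hsym.trace_eq_sum_eigenvalues
      simpa [Matrix.trace] using this
    rw [h1, lamPos, lamNeg, ← Finset.sum_sub_distrib]
    refine Finset.sum_congr rfl fun j _ => ?_
    rcases le_total 0 (hessEig n p z j) with h | h
    · rw [max_eq_left h, max_eq_right (by linarith)]; ring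
    · rw [max_eq_right h, max_eq_left (by linarith)]; ring
  have htr2 : ε * E * (4 * b ^ 2 * ‖d‖ ^ 2 - 2 * b * n) ≤ ∑ i, hessM n p z i i := by
    have h1 : ∀ i : Fin n, ε * E * (4 * b ^ 2 * (d i) ^ 2 - 2 * b) ≤ hessM n p z i i := by
      intro i
      have := (key (EuclideanSpace.single i 1)).2
      simpa [EuclideanSpace.inner_single_right, Pi.single_apply, Finset.sum_ite_eq] using this
    calc _ = ∑ i : Fin n, ε * E * (4 * b ^ 2 * (d i) ^ 2 - 2 * b) := by
          rw [EuclideanSpace.norm_sq_eq, ← Finset.mul_sum, Finset.sum_sub_distrib, ← Finset.mul_sum]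
          simp; ring_nf; simp
      _ ≤ _ := Finset.sum_le_sum fun i _ => h1 i
  have hgrad : gradient p z = (-(2 * b * ε * E)) • d := by
    apply ext_inner_right ℝ
    intro v
    rw [inner_gradient_left, (key v).1, inner_smul_left]; simp
  have hg2 : ‖gradient p z‖ ^ 2 = (2 * b * ε * E) ^ 2 * ‖d‖ ^ 2 := by
    rw [hgrad, norm_smul, mul_pow, Real.norm_eq_abs, sq_abs]; ring
  rw [hg2] at hloc
  have h5 : ε * E * (4 * b ^ 2 * ‖d‖ ^ 2 - 2 * b * n) ≤ C * (n * (2 * b * ε * E) + (2 * b * ε * E) ^ 2 * ‖d‖ ^ 2) := by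
    calc _ ≤ lamPos n p z := by linarith
      _ ≤ _ := hloc
      _ ≤ _ := by gcongr
  have h6 : 4 * b ^ 2 * ‖d‖ ^ 2 - 2 * b * n ≤ C * (n * (2 * b) + 4 * b ^ 2 * (ε * E) * ‖d‖ ^ 2) := by
    refine le_of_mul_le_mul_left (a := ε * E) ?_ (by positivity)
    calc _ ≤ _ := h5
      _ = _ := by ring
  have h7 : C * (4 * b ^ 2 * (ε * E) * ‖d‖ ^ 2) ≤ 2 * b ^ 2 * ‖d‖ ^ 2 := by
    have : C * (ε * E) ≤ 1 / 2 := by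
      calc C * (ε * E) = (C * ε) * E := by ring
        _ ≤ (1 / 2) * 1 := by gcongr
        _ = _ := by norm_num
    calc _ = (C * (ε * E)) * (4 * b ^ 2 * ‖d‖ ^ 2) := by ring
      _ ≤ (1 / 2) * (4 * b ^ 2 * ‖d‖ ^ 2) := by gcongr
      _ = _ := by ring
  refine le_of_mul_le_mul_left (a := 2 * b) ?_ (by positivity)
  nlinarith

lemma hopf {n : ℕ} {p : En n → ℝ} (hp : ContDiff ℝ (⊤ : ℕ∞) p) (a : En n) (b ε C P0 r1 r2 : ℝ)
    (hb : 0 < b) (hε : 0 < ε) (hC : 0 < C) (hCε : C * ε ≤ 1 / 2) (hr1 : 0 < r1)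
    (hbr : n * (1 + C) < b * r1 ^ 2)
    (hloc : ∀ z, ‖z - a‖ ≤ r2 → lamPos n p z ≤ C * (lamNeg n p z + ‖gradient p z‖ ^ 2))
    (hin : ∀ z, ‖z - a‖ ≤ r1 → P0 + ε ≤ p z) (hout : ∀ z, ‖z - a‖ ≤ r2 → P0 ≤ p z)
    (z : En n) (hz1 : r1 ≤ ‖z - a‖) (hz2 : ‖z - a‖ ≤ r2) :
    P0 + ε * (Real.exp (-b * ‖z - a‖ ^ 2) - Real.exp (-b * r2 ^ 2)) ≤ p z := by
  set f : En n → ℝ := fun y => p y - ε * Real.exp (-b * ‖y - a‖ ^ 2) with hf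
  have hpc := hp.continuous
  have hfc : Continuous f := by fun_prop
  let S : Set (En n) := {y | r1 ≤ ‖y - a‖} ∩ closedBall a r2
  have hS : IsCompact S := by
    apply (isCompact_closedBall a r2).inter_left
    exact isClosed_le continuous_const (by fun_prop)
  obtain ⟨y, hy, hymin⟩ := hS.exists_isMinOn ⟨z, hz1, by simpa [dist_eq_norm] using hz2⟩ hfc.continuousOn
  have hzy : f y ≤ f z := hymin ⟨hz1, by simpa [dist_eq_norm] using hz2⟩
  have hy1 : r1 ≤ ‖y - a‖ := hy.1
  have hy2 : ‖y - a‖ ≤ r2 := by simpa [dist_eq_norm] using hy.2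
  suffices h : P0 - ε * Real.exp (-b * r2 ^ 2) ≤ f y by
    have : f z = p z - ε * Real.exp (-b * ‖z - a‖ ^ 2) := rfl
    nlinarith
  rcases hy2.lt_or_eq with h2 | h2
  · rcases hy1.lt_or_eq with h1 | h1
    · exfalso
      have hloc' : IsLocalMin f y := by
        have hop : IsOpen {y : En n | r1 < ‖y - a‖ ∧ ‖y - a‖ < r2} :=
          IsOpen.and (isOpen_lt continuous_const (by fun_prop)) (isOpen_lt (by fun_prop) continuous_const)
        filter_upwards [hop.mem_nhds ⟨h1, h2⟩] with w hw
        exact hymin ⟨hw.1.le, by simpa [dist_eq_norm] using hw.2.le⟩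
      have := hopf_contra hp a y b ε C hb hε hC hCε hloc' (hloc y hy2)
      have h3 : b * r1 ^ 2 ≤ b * ‖y - a‖ ^ 2 := by gcongr
      linarith
    · have h3 := hin y h1.symm.le
      have h4 : Real.exp (-b * ‖y - a‖ ^ 2) ≤ 1 := by
        rw [Real.exp_le_one_iff]; nlinarith [sq_nonneg ‖y - a‖]
      have h5 := Real.exp_pos (-b * r2 ^ 2)
      simp only [hf]
      nlinarith
  · have h3 := hout y hy2
    simp only [hf, h2]; linarith

lemma lip_osc {n r : ℕ} (c : Mi n r → ℝ) (x : En n) (s A : ℝ) (hs : 0 < s)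
    (h : ∀ w : En n, ‖w‖ ≤ s → |bp c (x + w) - bp c x| ≤ A) (y z : En n) (hy : ‖y‖ ≤ s) (hz : ‖z‖ ≤ s) :
    |bp c (x + y) - bp c (x + z)| ≤ cG n r * cK n r * A / s * ‖y - z‖ := by
  have := (convex_closedBall x s).norm_image_sub_le_of_norm_fderiv_le (𝕜 := ℝ) (f := bp c) (C := cG n r * cK n r * A / s)
    (x := x + z) (y := x + y) (fun w _ => (bp_cont c).differentiable (by simp) w) (fun w hw => by
      have h1 := grad_osc c x s A hs h (w - x) (by simpa [dist_eq_norm] using hw)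
      rw [add_sub_cancel] at h1
      rwa [mul_assoc]) (by simpa using hz) (by simpa using hy)
  simpa using this

lemma drop1 {n r : ℕ} (c : Mi n r → ℝ) (σ C A0 : ℝ) (hC : 0 < C) (hA0 : 0 < A0)
    (hloc : ∀ x : En n, ‖x‖ < σ → lamPos n (bp c) x ≤ C * (lamNeg n (bp c) x + ‖gradient (bp c) x‖ ^ 2)) :
    ∃ c1 : ℝ, 0 < c1 ∧ ∀ (x : En n) (s A : ℝ), 0 < s → (∀ w : En n, ‖w‖ ≤ s → ‖x + w‖ < σ) → 0 < A → A ≤ A0 →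
      (∀ w : En n, ‖w‖ ≤ s → |bp c (x + w) - bp c x| ≤ A) →
      (∃ w : En n, ‖w‖ ≤ s ∧ A ≤ |bp c (x + w) - bp c x|) →
      ∃ w : En n, ‖w‖ ≤ 5 / 6 * s ∧ bp c (x + w) - bp c x ≤ -(c1 * A) := by
  have hN := one_le_cN n r
  have hK := one_le_cK n r
  have hG := one_le_cG n r
  set κ : ℝ := 1 / (2 * (cN n r * (3 ^ (n * r) * cK n r))) with hκ
  have hκ0 : 0 < κ := by positivity
  set G : ℝ := cG n r * cK n r with hGd
  have hG0 : 0 < G := by positivity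
  set ρ : ℝ := min (1 / 6) (κ / (2 * G)) with hρ
  have hρ0 : 0 < ρ := by positivity
  have hρ1 : ρ ≤ 1 / 6 := min_le_left _ _
  have hρ2 : G * ρ ≤ κ / 2 := by
    calc G * ρ ≤ G * (κ / (2 * G)) := by gcongr; exact min_le_right _ _
      _ = κ / 2 := by field_simp
  set ε1 : ℝ := min (κ / 4) (1 / (2 * C * A0)) with hε1
  have hε0 : 0 < ε1 := by positivity
  set β : ℝ := (n * (1 + C) + 1) / ρ ^ 2 with hβ
  have hβ0 : 0 < β := by positivity
  have hexp : 0 < Real.exp (-β / 9) - Real.exp (-β / 4) := by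
    rw [sub_pos, Real.exp_lt_exp]; linarith
  set c1 : ℝ := min κ (ε1 * (Real.exp (-β / 9) - Real.exp (-β / 4)) / 2) with hc1
  have hc10 : 0 < c1 := by positivity
  refine ⟨c1, hc10, ?_⟩
  intro x s A hs hball hA hAA0 hosc hatt
  by_contra hcon
  push Not at hcon
  -- point with large value in the small ball
  have hex : ∃ w : En n, ‖w‖ ≤ s / 3 ∧ κ * A ≤ |bp c (x + w) - bp c x| := by
    by_contra hno
    push Not at hno
    obtain ⟨w1, hw1, hw1A⟩ := hatt
    have h1 := grow3 c x (s / 3) (κ * A) (by positivity) (fun w hw => (hno w hw).le) w1 (by linarith)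
    have h2 : cN n r * (3 ^ (n * r) * (cK n r * (κ * A))) = A / 2 := by
      rw [hκ]; field_simp
    linarith
  obtain ⟨w, hw, hwA⟩ := hex
  have hw56 : ‖w‖ ≤ 5 / 6 * s := by linarith
  have hws : ‖w‖ ≤ s := by linarith
  have hpos : κ * A ≤ bp c (x + w) - bp c x := by
    rcases le_total 0 (bp c (x + w) - bp c x) with h | h
    · rwa [abs_of_nonneg h] at hwA
    · rw [abs_of_nonpos h] at hwA
      have h1 := hcon w hw56
      have h2 : c1 * A ≤ κ * A := by gcongr; exact min_le_left _ _
      linarith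
  have hin : ∀ z, ‖z - (x + w)‖ ≤ ρ * s → κ / 2 * A ≤ bp c z - bp c x := by
    intro z hz
    have hzx : ‖z - x‖ ≤ s := by
      calc ‖z - x‖ = ‖(z - (x + w)) + w‖ := by congr 1; abel
        _ ≤ ρ * s + s / 3 := (norm_add_le _ _).trans (add_le_add hz hw)
        _ ≤ s := by nlinarith
    have h1 := lip_osc c x s A hs hosc (z - x) w hzx hws
    rw [add_sub_cancel] at h1
    have h2 : ‖z - x - w‖ ≤ ρ * s := by rwa [sub_sub]
    have h3 : G * A / s * ‖z - x - w‖ ≤ κ / 2 * A := by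
      calc _ ≤ G * A / s * (ρ * s) := by gcongr
        _ = (G * ρ) * A := by field_simp
        _ ≤ _ := by gcongr
    have h4 := (abs_le.1 (h1.trans h3)).1
    linarith
  have hε1κ : ε1 ≤ κ / 4 := min_le_left _ _
  have hmain := hopf (bp_cont c) (x + w) (β / s ^ 2) (A * ε1) C (bp c x - c1 * A) (ρ * s) (s / 2)
    (by positivity) (by positivity) hC (by
      calc C * (A * ε1) ≤ C * (A0 * (1 / (2 * C * A0))) := by gcongr; exact min_le_right _ _
        _ = 1 / 2 := by field_simp) (by positivity) (by
      have : β / s ^ 2 * (ρ * s) ^ 2 = n * (1 + C) + 1 := by rw [hβ]; field_simp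
      rw [this]; linarith)
    (fun z hz => hloc z (by
      have h1 : ‖z - x‖ ≤ s := by
        calc ‖z - x‖ = ‖(z - (x + w)) + w‖ := by congr 1; abel
          _ ≤ s / 2 + s / 3 := (norm_add_le _ _).trans (add_le_add hz hw)
          _ ≤ s := by linarith
      have := hball (z - x) h1
      rwa [add_sub_cancel] at this))
    (fun z hz => by
      have := hin z hz
      have h2 : A * ε1 ≤ κ / 4 * A := by nlinarith
      have h3 : 0 ≤ c1 * A := by positivity
      nlinarith [mul_pos hκ0 hA])
    (fun z hz => by
      have h1 : ‖z - x‖ ≤ 5 / 6 * s := by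
        calc ‖z - x‖ = ‖(z - (x + w)) + w‖ := by congr 1; abel
          _ ≤ s / 2 + s / 3 := (norm_add_le _ _).trans (add_le_add hz hw)
          _ = 5 / 6 * s := by ring
      have := hcon (z - x) h1
      rw [add_sub_cancel] at this
      linarith)
  have hxw : ‖x - (x + w)‖ = ‖w‖ := by rw [sub_add_cancel_left, norm_neg]
  rcases lt_or_ge ‖w‖ (ρ * s) with h | h
  · have := hin x (by rw [hxw]; exact h.le)
    nlinarith [mul_pos hκ0 hA]
  · have h1 := hmain x (by rw [hxw]; exact h) (by rw [hxw]; linarith)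
    rw [hxw] at h1
    have h2 : Real.exp (-β / 9) ≤ Real.exp (-(β / s ^ 2) * ‖w‖ ^ 2) := by
      rw [Real.exp_le_exp]
      have : ‖w‖ ^ 2 ≤ (s / 3) ^ 2 := by gcongr
      have h3 : β / s ^ 2 * ‖w‖ ^ 2 ≤ β / s ^ 2 * (s / 3) ^ 2 := by gcongr
      have h4 : β / s ^ 2 * (s / 3) ^ 2 = β / 9 := by field_simp; norm_num
      linarith
    have h3 : Real.exp (-(β / s ^ 2) * (s / 2) ^ 2) = Real.exp (-β / 4) := by
      congr 1; field_simp; norm_num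
    rw [h3] at h1
    have h4 : A * ε1 * (Real.exp (-β / 9) - Real.exp (-β / 4)) ≤ c1 * A := by
      have : A * ε1 * (Real.exp (-β / 9) - Real.exp (-β / 4)) ≤ A * ε1 * (Real.exp (-(β / s ^ 2) * ‖w‖ ^ 2) - Real.exp (-β / 4)) := by gcongr
      linarith
    have h5 : c1 * A ≤ (ε1 * (Real.exp (-β / 9) - Real.exp (-β / 4)) / 2) * A := by
      gcongr; exact min_le_right _ _
    have h6 : 0 < ε1 * (Real.exp (-β / 9) - Real.exp (-β / 4)) * A := by positivity
    linarith

lemma drop2 {n r : ℕ} (c : Mi n r → ℝ) (σ C A0 : ℝ) (hC : 0 < C) (hA0 : 0 < A0)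
    (hloc : ∀ x : En n, ‖x‖ < σ → lamPos n (bp c) x ≤ C * (lamNeg n (bp c) x + ‖gradient (bp c) x‖ ^ 2)) :
    ∃ c1 ρ : ℝ, 0 < c1 ∧ 0 < ρ ∧ ∀ (x : En n) (s A : ℝ), 0 < s → (∀ w : En n, ‖w‖ ≤ s → ‖x + w‖ < σ) → 0 < A → A ≤ A0 →
      (∀ w : En n, ‖w‖ ≤ s → |bp c (x + w) - bp c x| ≤ A) →
      (∃ w : En n, ‖w‖ ≤ s ∧ A ≤ |bp c (x + w) - bp c x|) →
      ∃ w : En n, ∀ h : En n, ‖h - w‖ ≤ ρ * s → ‖h‖ ≤ s ∧ bp c (x + h) - bp c x ≤ -(c1 * A) := by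
  obtain ⟨c1, hc1, H⟩ := drop1 c σ C A0 hC hA0 hloc
  have hK := one_le_cK n r
  have hG := one_le_cG n r
  set G : ℝ := cG n r * cK n r with hGd
  have hG0 : 0 < G := by positivity
  set ρ : ℝ := min (1 / 6) (c1 / (2 * G)) with hρ
  have hρ0 : 0 < ρ := by positivity
  have hρ1 : ρ ≤ 1 / 6 := min_le_left _ _
  have hρ2 : G * ρ ≤ c1 / 2 := by
    calc G * ρ ≤ G * (c1 / (2 * G)) := by gcongr; exact min_le_right _ _
      _ = c1 / 2 := by field_simp
  refine ⟨c1 / 2, ρ, by positivity, hρ0, ?_⟩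
  intro x s A hs hball hA hAA0 hosc hatt
  obtain ⟨w, hw, hwA⟩ := H x s A hs hball hA hAA0 hosc hatt
  refine ⟨w, fun h hh => ?_⟩
  have h1 : ‖h‖ ≤ s := by
    calc ‖h‖ = ‖(h - w) + w‖ := by congr 1; abel
      _ ≤ ρ * s + 5 / 6 * s := (norm_add_le _ _).trans (add_le_add hh hw)
      _ ≤ s := by nlinarith
  refine ⟨h1, ?_⟩
  have h2 := lip_osc c x s A hs hosc h w h1 (by linarith)
  have h3 : G * A / s * ‖h - w‖ ≤ c1 / 2 * A := by
    calc _ ≤ G * A / s * (ρ * s) := by gcongr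
      _ = (G * ρ) * A := by field_simp
      _ ≤ _ := by gcongr
  have h4 := (abs_le.1 (h2.trans h3)).2
  linarith


open scoped ENNReal

/-- weight kernel -/
def wker {n : ℕ} (m : En n → ℝ) (R : ℝ) (x h : En n) : ℝ≥0∞ :=
  if ‖h‖ * m x ≤ R then ENNReal.ofReal (m x ^ n) else 0

lemma wker_meas {n : ℕ} (m : En n → ℝ) (hm : Continuous m) (R : ℝ) :
    Measurable fun q : En n × En n => wker m R q.1 q.2 := by
  unfold wker
  refine Measurable.ite ?_ ?_ measurable_const
  · refine (isClosed_le (f := fun q : En n × En n => ‖q.2‖ * m q.1) (g := fun _ => R) ?_ continuous_const).measurableSet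
    fun_prop
  · have : Continuous fun q : En n × En n => m q.1 ^ n := by fun_prop
    exact this.measurable.ennreal_ofReal

/-- volume of unit ball -/
def vB (n : ℕ) : ℝ≥0∞ := volume (ball (0 : En n) 1)

lemma vB_ne_zero (n : ℕ) : vB n ≠ 0 := (measure_ball_pos _ _ one_pos).ne'
lemma vB_ne_top (n : ℕ) : vB n ≠ ∞ := measure_ball_lt_top.ne

lemma vol_cb {n : ℕ} (w : En n) (s : ℝ) (hs : 0 ≤ s) :
    volume (closedBall w s) = ENNReal.ofReal (s ^ n) * vB n := by
  have := Measure.addHaar_closedBall (volume : Measure (En n)) w hs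
  simpa [vB] using this

lemma wker_int {n : ℕ} (m : En n → ℝ) (R : ℝ) (hR : 0 ≤ R) (x : En n) (hm : 0 < m x) :
    ∫⁻ h, wker m R x h = ENNReal.ofReal (R ^ n) * vB n := by
  have h1 : (fun h => wker m R x h) = (closedBall (0 : En n) (R / m x)).indicator (fun _ => ENNReal.ofReal (m x ^ n)) := by
    funext h
    simp only [wker, Set.indicator, mem_closedBall_zero_iff, le_div_iff₀ hm]
  rw [h1, lintegral_indicator measurableSet_closedBall, setLIntegral_const, vol_cb _ _ (by positivity),
    ← mul_assoc, ← ENNReal.ofReal_mul (by positivity), ← mul_pow]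
  congr 3
  field_simp

lemma wker_int2 {n : ℕ} (m : En n → ℝ) (hmc : Continuous m) (hm : ∀ x, 0 < m x) (R B : ℝ) (hR : 1 ≤ R) (hB : 1 ≤ B)
    (G : En n → ℝ≥0∞) (z : En n) :
    ∫⁻ h, ENNReal.ofReal (B ^ n) * wker m (R * B) z h * G z = ENNReal.ofReal (B ^ n * (R * B) ^ n) * vB n * G z := by
  have hz : Measurable fun h => wker m (R * B) z h := (wker_meas m hmc (R * B)).of_uncurry_left
  have hRB : 0 ≤ R * B := by positivity
  have hBn : 0 ≤ B ^ n := by positivity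
  have e0 := wker_int m (R * B) hRB z (hm z)
  have e1 : ∫⁻ h, ENNReal.ofReal (B ^ n) * wker m (R * B) z h * G z =
      (∫⁻ h, ENNReal.ofReal (B ^ n) * wker m (R * B) z h) * G z := lintegral_mul_const _ (hz.const_mul _)
  have e2 : ∫⁻ h, ENNReal.ofReal (B ^ n) * wker m (R * B) z h = ENNReal.ofReal (B ^ n) * ∫⁻ h, wker m (R * B) z h :=
    lintegral_const_mul _ hz
  rw [e1, e2, e0, ENNReal.ofReal_mul hBn]
  ring

lemma trans_est {n : ℕ} (m : En n → ℝ) (hmc : Continuous m) (hm : ∀ x, 0 < m x) (R B : ℝ) (hR : 1 ≤ R) (hB : 1 ≤ B)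
    (hcmp : ∀ x y, ‖y - x‖ * m x ≤ R → m y ≤ B * m x ∧ m x ≤ B * m y)
    (G : En n → ℝ≥0∞) (hG : Measurable G) (t : ℝ) (ht0 : 0 ≤ t) (ht1 : t ≤ 1) :
    ∫⁻ x, ∫⁻ h, wker m R x h * G (x + t • h) ≤ ENNReal.ofReal (B ^ n * (R * B) ^ n) * vB n * ∫⁻ z, G z := by
  have hk := wker_meas m hmc R
  have hk2 := wker_meas m hmc (R * B)
  have ms : Measurable fun q : En n × En n => wker m R q.1 q.2 * G (q.1 + t • q.2) := by
    refine hk.mul (hG.comp ?_)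
    fun_prop
  rw [lintegral_lintegral_swap ms.aemeasurable]
  have hpt : ∀ x h, wker m R x h ≤ ENNReal.ofReal (B ^ n) * wker m (R * B) (x + t • h) h := by
    intro x h
    by_cases hc : ‖h‖ * m x ≤ R
    · have h0 : ‖(x + t • h) - x‖ * m x ≤ R := by
        rw [add_sub_cancel_left, norm_smul, Real.norm_of_nonneg ht0]
        have : t * ‖h‖ ≤ ‖h‖ := mul_le_of_le_one_left (norm_nonneg _) ht1
        exact (mul_le_mul_of_nonneg_right this (hm x).le).trans hc
      obtain ⟨a1, a2⟩ := hcmp _ _ h0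
      have h2 : ‖h‖ * m (x + t • h) ≤ R * B := by
        calc ‖h‖ * m (x + t • h) ≤ ‖h‖ * (B * m x) := by gcongr
          _ = (‖h‖ * m x) * B := by ring
          _ ≤ R * B := by gcongr
      simp only [wker, if_pos hc, if_pos h2]
      rw [← ENNReal.ofReal_mul (by positivity), ← mul_pow]
      exact ENNReal.ofReal_le_ofReal (pow_le_pow_left₀ (hm x).le a2 n)
    · simp [wker, hc]
  calc ∫⁻ h, ∫⁻ x, wker m R x h * G (x + t • h)
      ≤ ∫⁻ h, ∫⁻ x, (fun z => ENNReal.ofReal (B ^ n) * wker m (R * B) z h * G z) (x + t • h) := by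
        refine lintegral_mono fun h => lintegral_mono fun x => ?_
        exact mul_le_mul_left (hpt x h) _
    _ = ∫⁻ h, ∫⁻ z, ENNReal.ofReal (B ^ n) * wker m (R * B) z h * G z := by
        refine lintegral_congr fun h => ?_
        exact lintegral_add_right_eq_self (fun z => ENNReal.ofReal (B ^ n) * wker m (R * B) z h * G z) _
    _ = ∫⁻ z, ∫⁻ h, ENNReal.ofReal (B ^ n) * wker m (R * B) z h * G z := by
        refine (lintegral_lintegral_swap ?_).symm
        exact (Measurable.mul (hk2.const_mul _) (hG.comp measurable_fst)).aemeasurable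
    _ = ∫⁻ z, ENNReal.ofReal (B ^ n * (R * B) ^ n) * vB n * G z := by
        exact lintegral_congr fun z => wker_int2 m hmc hm R B hR hB G z
    _ = _ := lintegral_const_mul _ hG

set_option maxHeartbeats 400000 in
lemma core {n : ℕ} (m : En n → ℝ) (hmc : Continuous m) (hm : ∀ x, 0 < m x) (R B : ℝ) (hR : 1 ≤ R) (hB : 1 ≤ B)
    (hcmp : ∀ x y, ‖y - x‖ * m x ≤ R → m y ≤ B * m x ∧ m x ≤ B * m y)
    (a g : En n → ℝ) (ha : Continuous a) (hg : Continuous g) (ha0 : ∀ x, 0 ≤ a x)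
    (ρ ε D : ℝ) (hρ : 0 < ρ) (hε : 0 ≤ ε) (hD : 0 ≤ D)
    (H : ∀ x, a x ≠ 0 → ∃ w : En n, ∀ h : En n, ‖h - w‖ ≤ ρ * (R / m x) → ‖h‖ * m x ≤ R ∧
      ENNReal.ofReal (a x) ≤ ENNReal.ofReal ε * ENNReal.ofReal (a (x + h))
        + ENNReal.ofReal (D * ‖h‖ ^ 2) * ∫⁻ t in Set.Icc (0:ℝ) 1, ENNReal.ofReal (g (x + t • h))) :
    ENNReal.ofReal ((ρ * R) ^ n) * ∫⁻ x, ENNReal.ofReal (m x ^ 2 * a x) ≤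
      ENNReal.ofReal (ε * B ^ 2 * (B ^ n * (R * B) ^ n)) * (∫⁻ x, ENNReal.ofReal (m x ^ 2 * a x))
      + ENNReal.ofReal (D * R ^ 2 * (B ^ n * (R * B) ^ n)) * ∫⁻ x, ENNReal.ofReal (g x) := by
  have hk := wker_meas m hmc R
  set G1 : En n → ℝ≥0∞ := fun x => ENNReal.ofReal (m x ^ 2 * a x) with hG1
  have mG1 : Measurable G1 := ((hmc.pow 2).mul ha).measurable.ennreal_ofReal
  set G2 : En n → ℝ≥0∞ := fun x => ENNReal.ofReal (g x) with hG2
  have mG2 : Measurable G2 := hg.measurable.ennreal_ofReal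
  set e1 := ENNReal.ofReal (ε * B ^ 2) with he1
  set e2 := ENNReal.ofReal (D * R ^ 2) with he2
  set K := ENNReal.ofReal (B ^ n * (R * B) ^ n) with hK
  have pt : ∀ x, ENNReal.ofReal ((ρ * R) ^ n) * vB n * G1 x ≤
      ∫⁻ h, (e1 * (wker m R x h * G1 (x + (1:ℝ) • h)) + e2 * (wker m R x h * ∫⁻ t in Set.Icc (0:ℝ) 1, G2 (x + t • h))) := by
    intro x
    by_cases hx : a x = 0
    · simp [hG1, hx]
    obtain ⟨w, hw⟩ := H x hx
    have hmx := hm x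
    have e : ENNReal.ofReal ((ρ * R) ^ n) * vB n * G1 x =
        ∫⁻ h in closedBall w (ρ * (R / m x)), ENNReal.ofReal (m x ^ n) * G1 x := by
      rw [setLIntegral_const, vol_cb _ _ (by positivity)]
      have : (ρ * R) ^ n = m x ^ n * (ρ * (R / m x)) ^ n := by
        rw [← mul_pow]; congr 1; field_simp
      rw [this, ENNReal.ofReal_mul (by positivity)]
      ring
    rw [e]
    refine le_trans (setLIntegral_mono' measurableSet_closedBall ?_) (setLIntegral_le_lintegral _ _)
    intro h hh
    rw [mem_closedBall, dist_eq_norm] at hh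
    obtain ⟨b1, b2⟩ := hw h hh
    have hkk : wker m R x h = ENNReal.ofReal (m x ^ n) := by simp [wker, b1]
    have hc := (hcmp x (x + h) (by simpa using b1)).2
    rw [hkk, one_smul]
    have key : G1 x ≤ e1 * G1 (x + h) + e2 * ∫⁻ t in Set.Icc (0:ℝ) 1, G2 (x + t • h) := by
      calc G1 x = ENNReal.ofReal (m x ^ 2) * ENNReal.ofReal (a x) := ENNReal.ofReal_mul (by positivity)
        _ ≤ ENNReal.ofReal (m x ^ 2) * _ := mul_le_mul_right b2 _
        _ = ENNReal.ofReal (m x ^ 2 * (ε * a (x + h))) + ENNReal.ofReal (m x ^ 2 * (D * ‖h‖ ^ 2)) *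
            ∫⁻ t in Set.Icc (0:ℝ) 1, G2 (x + t • h) := by
          rw [mul_add, ← mul_assoc, ← mul_assoc, ← ENNReal.ofReal_mul (by positivity), ← ENNReal.ofReal_mul (by positivity),
            ← ENNReal.ofReal_mul (by positivity), mul_assoc (m x ^ 2)]
        _ ≤ _ := by
          refine add_le_add ?_ (mul_le_mul_left (ENNReal.ofReal_le_ofReal ?_) _)
          · rw [he1, hG1, ← ENNReal.ofReal_mul (by positivity)]
            refine ENNReal.ofReal_le_ofReal ?_
            have := pow_le_pow_left₀ hmx.le hc 2
            calc m x ^ 2 * (ε * a (x + h)) ≤ (B * m (x + h)) ^ 2 * (ε * a (x + h)) :=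
                  mul_le_mul_of_nonneg_right this (mul_nonneg hε (ha0 _))
              _ = _ := by ring
          · have := pow_le_pow_left₀ (by positivity) b1 2
            calc m x ^ 2 * (D * ‖h‖ ^ 2) = D * (‖h‖ * m x) ^ 2 := by ring
              _ ≤ D * R ^ 2 := by gcongr
    calc _ ≤ ENNReal.ofReal (m x ^ n) * _ := mul_le_mul_right key _
      _ = _ := by ring
  have mT : Measurable fun q : (En n × En n) × ℝ => wker m R q.1.1 q.1.2 * G2 (q.1.1 + q.2 • q.1.2) := by
    refine (hk.comp measurable_fst).mul (mG2.comp ?_)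
    fun_prop
  have mI : Measurable fun q : En n × En n => wker m R q.1 q.2 * ∫⁻ t in Set.Icc (0:ℝ) 1, G2 (q.1 + t • q.2) := by
    refine hk.mul ?_
    have : Measurable fun q : (En n × En n) × ℝ => G2 (q.1.1 + q.2 • q.1.2) := mG2.comp (by fun_prop)
    exact this.lintegral_prod_right'
  have mJ : Measurable fun q : En n × En n => wker m R q.1 q.2 * G1 (q.1 + (1:ℝ) • q.2) :=
    hk.mul (mG1.comp (by fun_prop))
  have i2 : ∫⁻ x, ∫⁻ h, wker m R x h * ∫⁻ t in Set.Icc (0:ℝ) 1, G2 (x + t • h) ≤ K * vB n * ∫⁻ z, G2 z := by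
    calc ∫⁻ x, ∫⁻ h, wker m R x h * ∫⁻ t in Set.Icc (0:ℝ) 1, G2 (x + t • h)
        = ∫⁻ x, ∫⁻ h, ∫⁻ t in Set.Icc (0:ℝ) 1, wker m R x h * G2 (x + t • h) := by
          refine lintegral_congr fun x => lintegral_congr fun h => ?_
          rw [lintegral_const_mul]
          exact mG2.comp (by fun_prop)
      _ = ∫⁻ x, ∫⁻ t in Set.Icc (0:ℝ) 1, ∫⁻ h, wker m R x h * G2 (x + t • h) := by
          refine lintegral_congr fun x => lintegral_lintegral_swap ?_
          have : Measurable fun q : En n × ℝ => ((x, q.1), q.2) := by fun_prop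
          exact (mT.comp this).aemeasurable
      _ = ∫⁻ t in Set.Icc (0:ℝ) 1, ∫⁻ x, ∫⁻ h, wker m R x h * G2 (x + t • h) := by
          refine lintegral_lintegral_swap ?_
          have e : Measurable fun q : (En n × ℝ) × En n => ((q.1.1, q.2), q.1.2) := by fun_prop
          exact (mT.comp e).lintegral_prod_right'.aemeasurable
      _ ≤ ∫⁻ t in Set.Icc (0:ℝ) 1, K * vB n * ∫⁻ z, G2 z := by
          refine setLIntegral_mono' measurableSet_Icc fun t ht => ?_
          exact trans_est m hmc hm R B hR hB hcmp G2 mG2 t ht.1 ht.2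
      _ = _ := by rw [setLIntegral_const]; simp
  have i1 := trans_est m hmc hm R B hR hB hcmp G1 mG1 1 zero_le_one le_rfl
  have tot : ENNReal.ofReal ((ρ * R) ^ n) * vB n * ∫⁻ x, G1 x ≤
      e1 * (K * vB n * ∫⁻ z, G1 z) + e2 * (K * vB n * ∫⁻ z, G2 z) := by
    calc _ = ∫⁻ x, ENNReal.ofReal ((ρ * R) ^ n) * vB n * G1 x := (lintegral_const_mul _ mG1).symm
      _ ≤ _ := lintegral_mono pt
      _ = e1 * (∫⁻ x, ∫⁻ h, wker m R x h * G1 (x + (1:ℝ) • h)) +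
          e2 * ∫⁻ x, ∫⁻ h, wker m R x h * ∫⁻ t in Set.Icc (0:ℝ) 1, G2 (x + t • h) := by
        rw [← lintegral_const_mul _ mJ.lintegral_prod_right', ← lintegral_const_mul _ mI.lintegral_prod_right',
          ← lintegral_add_left (mJ.lintegral_prod_right'.const_mul _)]
        refine lintegral_congr fun x => ?_
        have s1 : Measurable fun h => wker m R x h * G1 (x + (1:ℝ) • h) :=
          Measurable.of_uncurry_left (f := fun x h => wker m R x h * G1 (x + (1:ℝ) • h)) mJ
        have s2 : Measurable fun h => wker m R x h * ∫⁻ t in Set.Icc (0:ℝ) 1, G2 (x + t • h) :=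
          Measurable.of_uncurry_left (f := fun x h => wker m R x h * ∫⁻ t in Set.Icc (0:ℝ) 1, G2 (x + t • h)) mI
        rw [lintegral_add_left (s1.const_mul _), lintegral_const_mul _ s1, lintegral_const_mul _ s2]
      _ ≤ _ := add_le_add (mul_le_mul_right i1 _) (mul_le_mul_right i2 _)
  have hv0 := vB_ne_zero n
  have hvt := vB_ne_top n
  rw [← ENNReal.mul_le_mul_iff_right hv0 hvt, ENNReal.ofReal_mul (by positivity), ENNReal.ofReal_mul (by positivity : 0 ≤ D * R ^ 2)]
  convert tot using 1 <;> ring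


open scoped ENNReal

lemma norm_grad {n : ℕ} (f : En n → ℝ) (x : En n) : ‖gradient f x‖ = ‖fderiv ℝ f x‖ := by
  simp [gradient]

lemma inner_grad {n : ℕ} (f : En n → ℝ) (x h : En n) : inner ℝ (gradient f x) h = fderiv ℝ f x h := by
  simp [gradient]

lemma grad_cont {n : ℕ} {f : En n → ℝ} (hf : ContDiff ℝ (⊤ : ℕ∞) f) : Continuous (gradient f) := by
  have h1 : Continuous (fderiv ℝ f) := hf.continuous_fderiv (by simp)
  exact (LinearIsometryEquiv.continuous _).comp h1

/-- the first order operator -/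
def XX {n : ℕ} (p u : En n → ℝ) (τ : ℝ) (x : En n) : En n := gradient u x + (τ * u x) • gradient p x

lemma XX_cont {n : ℕ} {p u : En n → ℝ} (hp : ContDiff ℝ (⊤ : ℕ∞) p) (hu : ContDiff ℝ (⊤ : ℕ∞) u) (τ : ℝ) :
    Continuous (XX p u τ) := by
  unfold XX
  have := grad_cont hp
  have := grad_cont hu
  have := hu.continuous
  fun_prop

lemma cs01 (f : ℝ → ℝ) (hf : Continuous f) : (∫ t in (0:ℝ)..1, f t) ^ 2 ≤ ∫ t in (0:ℝ)..1, f t ^ 2 := by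
  set c := ∫ t in (0:ℝ)..1, f t with hc
  have h0 : 0 ≤ ∫ t in (0:ℝ)..1, (f t - c) ^ 2 :=
    intervalIntegral.integral_nonneg zero_le_one fun t _ => sq_nonneg _
  have i1 : IntervalIntegrable (fun t => f t ^ 2) volume 0 1 := (hf.pow 2).intervalIntegrable _ _
  have i2 : IntervalIntegrable (fun t => 2 * c * f t) volume 0 1 := (by fun_prop : Continuous fun t => 2 * c * f t).intervalIntegrable _ _
  have e : (fun t => (f t - c) ^ 2) = fun t => (f t ^ 2 - 2 * c * f t) + c ^ 2 := by funext t; ring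
  rw [e, intervalIntegral.integral_add (i1.sub i2) (by simp), intervalIntegral.integral_sub i1 i2,
    intervalIntegral.integral_const_mul, ← hc] at h0
  simp at h0
  nlinarith

lemma pw {n : ℕ} {p u : En n → ℝ} (hp : ContDiff ℝ (⊤ : ℕ∞) p) (hu : ContDiff ℝ (⊤ : ℕ∞) u) (τ L κ : ℝ) (x h : En n)
    (hL : ∀ t : ℝ, 0 ≤ t → t ≤ 1 → τ * (p (x + t • h) - p x) ≤ L) (hκ : τ * (p (x + h) - p x) ≤ -κ) :
    ENNReal.ofReal (u x ^ 2) ≤ ENNReal.ofReal (2 * Real.exp (-(2 * κ))) * ENNReal.ofReal (u (x + h) ^ 2)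
      + ENNReal.ofReal (2 * Real.exp (2 * L) * ‖h‖ ^ 2) *
        ∫⁻ t in Set.Icc (0:ℝ) 1, ENNReal.ofReal (‖XX p u τ (x + t • h)‖ ^ 2) := by
  set φ : ℝ → ℝ := fun t => Real.exp (τ * (p (x + t • h) - p x)) * u (x + t • h) with hφ
  set ψ : ℝ → ℝ := fun t => Real.exp (τ * (p (x + t • h) - p x)) * inner ℝ (XX p u τ (x + t • h)) h with hψ
  have hX := XX_cont hp hu τ
  have hpc := hp.continuous
  have hd : ∀ t, HasDerivAt φ (ψ t) t := by
    intro t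
    have d1 := line_deriv1 hp x h t
    have d2 := line_deriv1 hu x h t
    have := (((d1.sub_const (p x)).const_mul τ).exp).mul d2
    refine HasDerivAt.congr_deriv this ?_
    simp only [hψ, XX, inner_add_left, real_inner_smul_left, inner_grad]
    ring
  have hψc : Continuous ψ := by
    have : Continuous fun t : ℝ => XX p u τ (x + t • h) := hX.comp (by fun_prop)
    simp only [hψ]
    fun_prop
  have ftc : ∫ t in (0:ℝ)..1, ψ t = φ 1 - φ 0 :=
    intervalIntegral.integral_eq_sub_of_hasDerivAt (fun t _ => hd t) (hψc.intervalIntegrable _ _)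
  have e0 : φ 0 = u x := by simp [hφ]
  have e1 : φ 1 ^ 2 ≤ Real.exp (-(2 * κ)) * u (x + h) ^ 2 := by
    simp only [hφ, one_smul, mul_pow]
    gcongr
    rw [← Real.exp_nat_mul]
    gcongr
    push_cast
    linarith
  have hc := cs01 ψ hψc
  set g : ℝ → ℝ := fun t => ‖XX p u τ (x + t • h)‖ ^ 2 with hg
  have hgc : Continuous g := by
    have : Continuous fun t : ℝ => XX p u τ (x + t • h) := hX.comp (by fun_prop)
    simp only [hg]
    fun_prop
  have hm : ∫ t in (0:ℝ)..1, ψ t ^ 2 ≤ ∫ t in (0:ℝ)..1, Real.exp (2 * L) * ‖h‖ ^ 2 * g t := by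
    refine intervalIntegral.integral_mono_on zero_le_one ((hψc.pow 2).intervalIntegrable _ _)
      ((hgc.const_mul _).intervalIntegrable _ _) ?_
    intro t ht
    simp only [hψ, hg, mul_pow]
    have a1 : Real.exp (τ * (p (x + t • h) - p x)) ^ 2 ≤ Real.exp (2 * L) := by
      rw [← Real.exp_nat_mul]
      have := hL t ht.1 ht.2
      refine Real.exp_le_exp.2 ?_
      push_cast
      linarith
    have a2 : (inner ℝ (XX p u τ (x + t • h)) h) ^ 2 ≤ ‖h‖ ^ 2 * ‖XX p u τ (x + t • h)‖ ^ 2 := by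
      rw [← sq_abs, ← mul_pow, mul_comm]
      gcongr
      exact abs_real_inner_le_norm _ _
    rw [mul_assoc]
    exact mul_le_mul a1 a2 (sq_nonneg _) (Real.exp_nonneg _)
  rw [intervalIntegral.integral_const_mul] at hm
  have fin : u x ^ 2 ≤ 2 * Real.exp (-(2 * κ)) * u (x + h) ^ 2 + 2 * Real.exp (2 * L) * ‖h‖ ^ 2 * ∫ t in (0:ℝ)..1, g t := by
    have : u x = φ 1 - ∫ t in (0:ℝ)..1, ψ t := by rw [ftc, e0]; ring
    rw [this]
    nlinarith [sq_nonneg (φ 1 + ∫ t in (0:ℝ)..1, ψ t)]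
  have hgi : ENNReal.ofReal (∫ t in (0:ℝ)..1, g t) = ∫⁻ t in Set.Icc (0:ℝ) 1, ENNReal.ofReal (g t) := by
    rw [intervalIntegral.integral_of_le zero_le_one, ← integral_Icc_eq_integral_Ioc]
    refine ofReal_integral_eq_lintegral_ofReal ?_ (Eventually.of_forall fun t => by positivity)
    exact hgc.continuousOn.integrableOn_Icc
  have hgn : 0 ≤ ∫ t in (0:ℝ)..1, g t := intervalIntegral.integral_nonneg zero_le_one fun t _ => by positivity
  rw [← hgi, ← ENNReal.ofReal_mul (by positivity), ← ENNReal.ofReal_mul (by positivity),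
    ← ENNReal.ofReal_add (by positivity) (by positivity)]
  exact ENNReal.ofReal_le_ofReal fin

lemma exists_R (n r : ℕ) (ρ κ : ℝ) (hρ : 0 < ρ) (hκ : 0 < κ) : ∃ R : ℝ, 1 ≤ R ∧ 2 * cN n r ≤ R ∧
    2 * Real.exp (-(2 * (κ * R))) * cB n r R ^ 2 * (cB n r R ^ n * (R * cB n r R) ^ n) ≤ (ρ * R) ^ n / 2 := by
  set b := cN n r * (cK n r * (2 * (cN n r * 2 ^ (n * r)))) with hb
  have hB : ∀ R : ℝ, cB n r R = b * R ^ (n * r) := by intro R; simp only [cB, hb, mul_pow]; ring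
  have T := tendsto_rpow_mul_exp_neg_mul_atTop_nhds_zero ((n * r * (2 * n + 2) : ℕ) : ℝ) (2 * κ) (by positivity)
  have T2 := T.const_mul (2 * b ^ (2 * n + 2))
  rw [mul_zero] at T2
  have ev := T2.eventually (Iio_mem_nhds (show 0 < ρ ^ n / 2 by positivity))
  obtain ⟨R, h1, h2, h3⟩ := (ev.and ((eventually_ge_atTop 1).and (eventually_ge_atTop (2 * cN n r)))).exists
  refine ⟨R, h2, h3, ?_⟩
  rw [Real.rpow_natCast] at h1
  have hR : 0 < R := by linarith
  rw [hB]
  have : 2 * Real.exp (-(2 * (κ * R))) * (b * R ^ (n * r)) ^ 2 * ((b * R ^ (n * r)) ^ n * (R * (b * R ^ (n * r))) ^ n)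
      = R ^ n * (2 * b ^ (2 * n + 2) * (R ^ (n * r * (2 * n + 2)) * Real.exp (-(2 * κ) * R))) := by
    have e : -(2 * (κ * R)) = -(2 * κ) * R := by ring
    rw [e]
    ring
  rw [this]
  have h1' : 2 * b ^ (2 * n + 2) * (R ^ (n * r * (2 * n + 2)) * Real.exp (-(2 * κ) * R)) ≤ ρ ^ n / 2 := le_of_lt h1
  calc _ ≤ R ^ n * (ρ ^ n / 2) := by gcongr
    _ = _ := by rw [mul_pow]; ring

lemma sup_bound {n : ℕ} (f : En n → ℝ) (hf : Continuous f) (σ : ℝ) : ∃ M : ℝ, 0 ≤ M ∧ ∀ x : En n, ‖x‖ ≤ σ → |f x| ≤ M := by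
  obtain ⟨M, hM⟩ := (isCompact_closedBall (0 : En n) σ).exists_bound_of_continuousOn hf.continuousOn
  exact ⟨|M|, abs_nonneg _, fun x hx => (hM x (by simpa using hx)).trans (le_abs_self _)⟩

lemma test_int {n : ℕ} {u f : En n → ℝ} (hu : HasCompactSupport u) (hf : Continuous f)
    (h : ∀ x, x ∉ tsupport u → f x = 0) : Integrable f :=
  hf.integrable_of_hasCompactSupport (HasCompactSupport.intro hu h)

lemma grad_zero_off {n : ℕ} {u : En n → ℝ} {x : En n} (hx : x ∉ tsupport u) : u x = 0 ∧ gradient u x = 0 := by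
  refine ⟨image_eq_zero_of_notMem_tsupport hx, ?_⟩
  have : fderiv ℝ u x = 0 := by
    have := support_fderiv_subset ℝ (f := u)
    by_contra h
    exact hx (this h)
  simp [gradient, this]

lemma large_tau {n r : ℕ} (c : Mi n r → ℝ) (hne : ∃ a b : En n, bp c a ≠ bp c b) (hnr : 0 < n * r)
    (σ C : ℝ) (hσ : 0 < σ) (hC : 0 < C)
    (hloc : ∀ x : En n, ‖x‖ < σ → lamPos n (bp c) x ≤ C * (lamNeg n (bp c) x + ‖gradient (bp c) x‖ ^ 2)) :
    ∃ τ0 K : ℝ, 1 ≤ τ0 ∧ 0 ≤ K ∧ ∀ τ : ℝ, τ0 ≤ τ → ∀ u : En n → ℝ, TestFun n u → tsupport u ⊆ ball (0 : En n) (σ / 2) →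
      ∫ x, mw c τ x ^ 2 * u x ^ 2 ≤ K * ∫ x, ‖XX (bp c) u τ x‖ ^ 2 := by
  have hpc := bp_cont c
  obtain ⟨M, hM0, hM⟩ := sup_bound (bp c) hpc.continuous σ
  obtain ⟨c1, ρ, hc1, hρ, hdrop⟩ := drop2 c σ C (2 * M + 1) hC (by positivity) hloc
  have hN := one_le_cN n r
  have hK := one_le_cK n r
  set κ : ℝ := c1 / (2 * cN n r * cK n r) with hκ
  have hκ0 : 0 < κ := by positivity
  obtain ⟨R, hR1, hR2, hR⟩ := exists_R n r ρ κ hρ hκ0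
  have hRp : 0 < R := by linarith
  set B := cB n r R with hB
  have hB1 : 1 ≤ B := one_le_cB n r R hR1
  set L : ℝ := cN n r * R ^ (n * r) with hL
  -- lower bound for m at τ = 1
  obtain ⟨z0, -, hz0⟩ := (isCompact_closedBall (0 : En n) σ).exists_isMinOn ⟨0, by simp [hσ.le]⟩ (mw_cont c 1).continuousOn
  have hm0 : 0 < mw c 1 z0 := mw_pos c hne 1 one_pos z0
  set m0 := mw c 1 z0 with hm0d
  have T : Tendsto (fun τ : ℝ => τ ^ ((1:ℝ) / ((n * r : ℕ) : ℝ))) atTop atTop :=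
    tendsto_rpow_atTop (by positivity)
  obtain ⟨τ1, hτ1⟩ := (T.eventually_ge_atTop (4 * R / σ / m0)).exists_forall_of_atTop
  set D : ℝ := 2 * Real.exp (2 * L) with hD
  refine ⟨max 1 τ1, 2 * (D * R ^ 2 * (B ^ n * (R * B) ^ n)) / (ρ * R) ^ n, le_max_left _ _, by positivity, ?_⟩
  intro τ hτ u hu hsupp
  have hτ1' : 1 ≤ τ := (le_max_left _ _).trans hτ
  have hτ0 : 0 < τ := by linarith
  have hτ2 := hτ1 τ ((le_max_right _ _).trans hτ)
  set m : En n → ℝ := mw c τ with hmd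
  have hm : ∀ x, 0 < m x := fun x => mw_pos c hne τ hτ0 x
  have hmlow : ∀ x : En n, ‖x‖ ≤ σ → 4 * R / σ ≤ m x := by
    intro x hx
    have a1 := mw_tau c τ hτ1' x
    have a2 : m0 ≤ mw c 1 x := hz0 (by simpa using hx)
    calc 4 * R / σ = 4 * R / σ / m0 * m0 := by field_simp
      _ ≤ τ ^ ((1:ℝ) / ((n * r : ℕ) : ℝ)) * mw c 1 x := by gcongr
      _ ≤ _ := a1
  have hcore := core m (mw_cont c τ) hm R B hR1 hB1
    (fun x y hxy => ⟨mw_compare1 c τ hτ0 x y (hm x) R hR1 hxy, mw_compare2 c τ hτ0 x y (hm x) (hm y) R hR1 hxy⟩)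
    (fun x => u x ^ 2) (fun x => ‖XX (bp c) u τ x‖ ^ 2) (hu.1.continuous.pow 2) ((XX_cont hpc hu.1 τ).norm.pow 2)
    (fun x => sq_nonneg _) ρ (2 * Real.exp (-(2 * (κ * R)))) D hρ (by positivity) (by positivity) ?_
  · have iI : Integrable (fun x => m x ^ 2 * u x ^ 2) := by
      refine test_int hu.2 (((mw_cont c τ).pow 2).mul (hu.1.continuous.pow 2)) fun x hx => ?_
      simp [(grad_zero_off hx).1]
    have iW : Integrable (fun x => ‖XX (bp c) u τ x‖ ^ 2) := by
      refine test_int hu.2 ((XX_cont hpc hu.1 τ).norm.pow 2) fun x hx => ?_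
      simp [XX, (grad_zero_off hx).1, (grad_zero_off hx).2]
    have nI : 0 ≤ ∫ x, m x ^ 2 * u x ^ 2 := integral_nonneg fun x => by positivity
    have nW : 0 ≤ ∫ x, ‖XX (bp c) u τ x‖ ^ 2 := integral_nonneg fun x => by positivity
    rw [← ofReal_integral_eq_lintegral_ofReal iI (Eventually.of_forall fun x => by positivity),
      ← ofReal_integral_eq_lintegral_ofReal iW (Eventually.of_forall fun x => by positivity),
      ← ENNReal.ofReal_mul (by positivity), ← ENNReal.ofReal_mul (by positivity), ← ENNReal.ofReal_mul (by positivity),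
      ← ENNReal.ofReal_add (by positivity) (by positivity), ENNReal.ofReal_le_ofReal_iff (by positivity)] at hcore
    have h2 := mul_le_mul_of_nonneg_right hR nI
    rw [div_mul_eq_mul_div, le_div_iff₀ (by positivity)]
    nlinarith
  · intro x hx
    have hux : u x ≠ 0 := by
      intro h; exact hx (by simp [h])
    have hxs : ‖x‖ < σ / 2 := by simpa using hsupp (subset_tsupport u hux)
    have hmx := hm x
    have hlow := hmlow x (by linarith)
    set s := R / m x with hs
    have hs0 : 0 < s := by positivity
    have hs4 : s ≤ σ / 4 := by
      rw [hs, div_le_iff₀ hmx]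
      calc R = σ / 4 * (4 * R / σ) := by field_simp
        _ ≤ _ := by gcongr
    have hsm : s * m x = R := by rw [hs]; field_simp
    have hin : ∀ w : En n, ‖w‖ ≤ s → ‖x + w‖ < σ := fun w hw => by
      have := norm_add_le x w; linarith
    obtain ⟨w1, hw1, hmax⟩ := (isCompact_closedBall (0 : En n) s).exists_isMaxOn (f := fun w => |bp c (x + w) - bp c x|)
      ⟨0, by simp [hs0.le]⟩ (by
        have := hpc.continuous
        exact Continuous.continuousOn (by fun_prop))
    have hw1' : ‖w1‖ ≤ s := by simpa using hw1
    set A := |bp c (x + w1) - bp c x| with hA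
    have hosc : ∀ w : En n, ‖w‖ ≤ s → |bp c (x + w) - bp c x| ≤ A := fun w hw => hmax (by simpa using hw)
    have hlo := osc_lower c τ hτ0.le x hmx R hR2 A hosc
    have hA0 : 0 < A := by
      have : 0 < τ * A := lt_of_lt_of_le (by positivity) hlo
      exact pos_of_mul_pos_right this hτ0.le
    have hAM : A ≤ 2 * M + 1 := by
      have b1 := hM (x + w1) (hin w1 hw1').le
      have b2 := hM x (by linarith)
      have := abs_sub (bp c (x + w1)) (bp c x)
      linarith
    obtain ⟨w, hw⟩ := hdrop x s A hs0 hin hA0 hAM hosc ⟨w1, hw1', le_rfl⟩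
    refine ⟨w, fun h hh => ?_⟩
    obtain ⟨q1, q2⟩ := hw h hh
    have hhm : ‖h‖ * m x ≤ R := by rw [← hsm]; gcongr
    refine ⟨hhm, ?_⟩
    refine pw hpc hu.1 τ L (κ * R) x h ?_ ?_
    · intro t ht0 ht1
      have : ‖t • h‖ * m x ≤ R := by
        rw [norm_smul, Real.norm_of_nonneg ht0]
        have : t * ‖h‖ ≤ ‖h‖ := mul_le_of_le_one_left (norm_nonneg _) ht1
        exact (mul_le_mul_of_nonneg_right this hmx.le).trans hhm
      have := osc_upper c τ hτ0.le x (t • h) hmx R hR1 this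
      refine le_trans ?_ this
      gcongr
      exact le_abs_self _
    · calc τ * (bp c (x + h) - bp c x) ≤ τ * (-(c1 * A)) := by gcongr
        _ = -(c1 * (τ * A)) := by ring
        _ ≤ -(c1 * (R / (2 * cN n r * cK n r))) := by gcongr
        _ = -(κ * R) := by rw [hκ]; ring


lemma basic_split {n : ℕ} {p u : En n → ℝ} (hp : ContDiff ℝ (⊤ : ℕ∞) p) (hu : TestFun n u) (τ : ℝ) :
    (∫ x : En n, ‖gradient u x‖ ^ 2) ≤ 2 * (∫ x, ‖XX p u τ x‖ ^ 2) + 2 * (τ ^ 2 * ∫ x : En n, ‖gradient p x‖ ^ 2 * u x ^ 2) := by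
  have gu := grad_cont hu.1
  have gp := grad_cont hp
  have cu := hu.1.continuous
  have i1 : Integrable fun x => ‖gradient u x‖ ^ 2 := test_int hu.2 (by fun_prop) fun x hx => by simp [(grad_zero_off hx).2]
  have i2 : Integrable fun x => ‖XX p u τ x‖ ^ 2 := test_int hu.2 ((XX_cont hp hu.1 τ).norm.pow 2) fun x hx => by
    simp [XX, (grad_zero_off hx).1, (grad_zero_off hx).2]
  have i3 : Integrable fun x => ‖gradient p x‖ ^ 2 * u x ^ 2 := test_int hu.2 (by fun_prop) fun x hx => by
    simp [(grad_zero_off hx).1]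
  rw [← mul_assoc, ← integral_const_mul, ← integral_const_mul, ← integral_add (i2.const_mul _) (i3.const_mul _)]
  refine integral_mono i1 ((i2.const_mul _).add (i3.const_mul _)) fun x => ?_
  have e : gradient u x = XX p u τ x - (τ * u x) • gradient p x := by simp [XX]
  have h1 : ‖gradient u x‖ ≤ ‖XX p u τ x‖ + |τ * u x| * ‖gradient p x‖ := by
    rw [e]
    refine (norm_sub_le _ _).trans ?_
    rw [norm_smul, Real.norm_eq_abs]
  have h2 := pow_le_pow_left₀ (norm_nonneg _) h1 2
  have h3 : (|τ * u x| * ‖gradient p x‖) ^ 2 = τ ^ 2 * (‖gradient p x‖ ^ 2 * u x ^ 2) := by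
    rw [mul_pow, sq_abs]; ring
  show ‖gradient u x‖ ^ 2 ≤ 2 * ‖XX p u τ x‖ ^ 2 + 2 * τ ^ 2 * (‖gradient p x‖ ^ 2 * u x ^ 2)
  nlinarith [sq_nonneg (‖XX p u τ x‖ - |τ * u x| * ‖gradient p x‖)]

/-- local maximal estimate for polynomials satisfying the eigenvalue
estimate near the origin. -/
theorem poly_local_maximal_estimate (n r : ℕ) (hr : 1 ≤ r)
    (p : En n → ℝ) (hp : IsPolyDeg n r p) (σ C : ℝ) (hσ : 0 < σ) (hC : 0 < C)
    (hloc : ∀ x : En n, ‖x‖ < σ →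
      lamPos n p x ≤ C * (lamNeg n p x + ‖gradient p x‖ ^ 2)) :
    ∃ σ' : ℝ, 0 < σ' ∧ σ' ≤ σ ∧ ∃ c₀ > (0 : ℝ), ∀ τ : ℝ, 0 < τ →
      ∀ u : En n → ℝ, TestFun n u → tsupport u ⊆ Metric.ball (0 : En n) σ' →
        (∫ x : En n, ‖gradient u x‖ ^ 2)
            + τ ^ 2 * ∫ x : En n, ‖gradient p x‖ ^ 2 * u x ^ 2
          ≤ c₀ * (∫ x : En n, ‖gradient u x + (τ * u x) • gradient p x‖ ^ 2)
            + c₀ * ∫ x : En n, u x ^ 2 := by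
  obtain ⟨c, hc⟩ := exists_bp hp
  obtain rfl : p = bp c := funext hc
  refine ⟨σ / 2, by positivity, by linarith, ?_⟩
  by_cases hne : ∃ a b : En n, bp c a ≠ bp c b
  · have hnr : 0 < n * r := by
      refine Nat.mul_pos (Nat.pos_of_ne_zero ?_) hr
      rintro rfl
      obtain ⟨a, b, hab⟩ := hne
      exact hab (by rw [Subsingleton.elim a b])
    have hpc := bp_cont c
    obtain ⟨τ0, K, hτ0, hK, H⟩ := large_tau c hne hnr σ C hσ hC hloc
    obtain ⟨M, hM0, hM⟩ := sup_bound (fun x => ‖gradient (bp c) x‖) (grad_cont hpc).norm σ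
    set K1 := cG n r * (cK n r * cN n r) with hK1
    have hN := one_le_cN n r
    have hKK := one_le_cK n r
    have hG := one_le_cG n r
    have hK10 : 0 < K1 := by positivity
    refine ⟨2 + 3 * (τ0 ^ 2 * M ^ 2) + 3 * (K1 ^ 2 * K), by positivity, ?_⟩
    intro τ hτ u hu hsupp
    have hb := basic_split hpc hu τ
    change _ ≤ _ * (∫ x, ‖XX (bp c) u τ x‖ ^ 2) + _
    have gp := grad_cont hpc
    have cu := hu.1.continuous
    have i3 : Integrable fun x => ‖gradient (bp c) x‖ ^ 2 * u x ^ 2 := test_int hu.2 (by fun_prop) fun x hx => by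
      simp [(grad_zero_off hx).1]
    have i4 : Integrable fun x => u x ^ 2 := test_int hu.2 (by fun_prop) fun x hx => by
      simp [(grad_zero_off hx).1]
    have nW : 0 ≤ ∫ x, ‖XX (bp c) u τ x‖ ^ 2 := integral_nonneg fun x => by positivity
    have nU : 0 ≤ ∫ x, u x ^ 2 := integral_nonneg fun x => by positivity
    have nF : 0 ≤ ∫ x, ‖gradient (bp c) x‖ ^ 2 * u x ^ 2 := integral_nonneg fun x => by positivity
    set W := ∫ x, ‖XX (bp c) u τ x‖ ^ 2
    set U := ∫ x, u x ^ 2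
    set F := ∫ x, ‖gradient (bp c) x‖ ^ 2 * u x ^ 2 with hF
    have key : τ ^ 2 * F ≤ τ0 ^ 2 * M ^ 2 * U + K1 ^ 2 * K * W := by
      rcases le_total τ τ0 with h | h
      · have : F ≤ M ^ 2 * U := by
          rw [← integral_const_mul]
          refine integral_mono i3 (i4.const_mul _) fun x => ?_
          by_cases hx : u x = 0
          · simp [hx]
          · have : ‖x‖ < σ / 2 := by simpa using hsupp (subset_tsupport u hx)
            have := hM x (by linarith)
            simp only [abs_norm] at this
            show ‖gradient (bp c) x‖ ^ 2 * u x ^ 2 ≤ M ^ 2 * u x ^ 2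
            gcongr
        calc τ ^ 2 * F ≤ τ0 ^ 2 * (M ^ 2 * U) := by gcongr
          _ ≤ _ := by
            have : 0 ≤ K1 ^ 2 * K * W := by positivity
            linarith
      · have hI := H τ h u hu hsupp
        have iI : Integrable (fun x => mw c τ x ^ 2 * u x ^ 2) := by
          refine test_int hu.2 (((mw_cont c τ).pow 2).mul (hu.1.continuous.pow 2)) fun x hx => ?_
          simp [(grad_zero_off hx).1]
        have : τ ^ 2 * F ≤ K1 ^ 2 * ∫ x, mw c τ x ^ 2 * u x ^ 2 := by
          rw [hF, ← integral_const_mul, ← integral_const_mul]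
          refine integral_mono (i3.const_mul _) (iI.const_mul _) fun x => ?_
          have h1 := grad_mw c τ hτ x (mw_pos c hne τ hτ x)
          rw [← norm_grad] at h1
          have h2 := pow_le_pow_left₀ (by positivity) h1 2
          show τ ^ 2 * (‖gradient (bp c) x‖ ^ 2 * u x ^ 2) ≤ K1 ^ 2 * (mw c τ x ^ 2 * u x ^ 2)
          calc _ = (τ * ‖gradient (bp c) x‖) ^ 2 * u x ^ 2 := by ring
            _ ≤ (cG n r * (cK n r * cN n r) * mw c τ x) ^ 2 * u x ^ 2 := by gcongr
            _ = _ := by rw [hK1]; ring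
        calc τ ^ 2 * F ≤ K1 ^ 2 * (K * W) := this.trans (by gcongr)
          _ ≤ _ := by
            have : 0 ≤ τ0 ^ 2 * M ^ 2 * U := by positivity
            linarith
    have n1 : 0 ≤ τ0 ^ 2 * M ^ 2 * W := by positivity
    have n2 : 0 ≤ K1 ^ 2 * K * U := by positivity
    nlinarith
  · push Not at hne
    have hg : ∀ x, gradient (bp c) x = 0 := by
      intro x
      have : bp c = fun _ => bp c 0 := funext fun y => hne y 0
      rw [this]
      simp [gradient]
    refine ⟨1, one_pos, fun τ hτ u hu hsupp => ?_⟩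
    have nU : 0 ≤ ∫ x, u x ^ 2 := integral_nonneg fun x => by positivity
    simp only [hg, smul_zero, add_zero, norm_zero]
    simp
    exact nU

end
end

section
/- For every real δ ≠ 0, let V_δ : ℝ² → ℝ be defined by V_δ(x₁, x₂) = x₁²x₂² + δ(x₁² + x₂²). Then there exists a constant C > 0 (depending on δ) such that for all (x₁, x₂) ∈ ℝ²: ΔV_δ(x) = 2x₁² + 2x₂² + 4δ ≤ C (1 + |∇V_δ(x)|²). -/
open MeasureTheory Filter Topology Metric

noncomputable section

/-- One-variable bound: `δ² a ≤ 2|δ|³ + 4 (a (b+δ)² + b (a+δ)²)` for `a, b ≥ 0`. -/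
theorem Vdelta_aux (δ a b : ℝ) (ha : 0 ≤ a) (hb : 0 ≤ b) :
    δ ^ 2 * a ≤ 2 * |δ| ^ 3 + 4 * (a * (b + δ) ^ 2 + b * (a + δ) ^ 2) := by
  have hd : 0 ≤ |δ| := abs_nonneg δ
  have h1 : δ ≤ |δ| := le_abs_self δ
  have h2 : -|δ| ≤ δ := neg_abs_le δ
  have hsq : |δ| ^ 2 = δ ^ 2 := sq_abs δ
  have hA : 0 ≤ a * (b + δ) ^ 2 := by positivity
  have hB : 0 ≤ b * (a + δ) ^ 2 := by positivity
  have h3 : 0 ≤ |δ| ^ 3 := by positivity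
  rcases le_total b (|δ| / 2) with h | h
  · have key : (|δ| / 2) ^ 2 ≤ (b + δ) ^ 2 := by
      rcases abs_cases δ with ⟨e, _⟩ | ⟨e, _⟩ <;> rw [e] at h ⊢ <;> nlinarith
    have := mul_le_mul_of_nonneg_left key ha
    nlinarith
  · rcases le_total a (2 * |δ|) with h' | h'
    · have := mul_le_mul_of_nonneg_left h' (sq_nonneg δ)
      have e : δ ^ 2 * (2 * |δ|) = 2 * |δ| ^ 3 := by rw [← hsq]; ring
      linarith
    · have k1 : (a / 2) ^ 2 ≤ (a + δ) ^ 2 := by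
        apply sq_le_sq' <;> linarith
      have k2 : |δ| / 2 * (a / 2) ^ 2 ≤ b * (a + δ) ^ 2 :=
        mul_le_mul h k1 (sq_nonneg _) hb
      have k3 := mul_le_mul_of_nonneg_left h' (mul_nonneg hd ha)
      have e : δ ^ 2 * a = |δ| ^ 2 * a := by rw [hsq]
      nlinarith

/-- for `V_δ(x) = x₁²x₂² + δ(x₁² + x₂²)` with `δ ≠ 0`, the Laplacian
is controlled by `1 + |∇V_δ|²`. -/
theorem Vdelta_laplacian_controlled (δ : ℝ) (hδ : δ ≠ 0) :
    ∃ C > (0 : ℝ), ∀ x₁ x₂ : ℝ,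
      2 * x₁ ^ 2 + 2 * x₂ ^ 2 + 4 * δ
        ≤ C * (1 + (4 * x₁ ^ 2 * (x₂ ^ 2 + δ) ^ 2
            + 4 * x₂ ^ 2 * (x₁ ^ 2 + δ) ^ 2)) := by
  have hp : 0 < δ ^ 2 := by positivity
  have hd : 0 < |δ| := abs_pos.mpr hδ
  have hsq : |δ| ^ 2 = δ ^ 2 := sq_abs δ
  refine ⟨12 * |δ| + 4 / δ ^ 2, by positivity, fun x y => ?_⟩
  have hx := Vdelta_aux δ (x ^ 2) (y ^ 2) (sq_nonneg x) (sq_nonneg y)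
  have hy := Vdelta_aux δ (y ^ 2) (x ^ 2) (sq_nonneg y) (sq_nonneg x)
  have hG : 0 ≤ x ^ 2 * (y ^ 2 + δ) ^ 2 + y ^ 2 * (x ^ 2 + δ) ^ 2 := by positivity
  have hE : 4 * x ^ 2 * (y ^ 2 + δ) ^ 2 + 4 * y ^ 2 * (x ^ 2 + δ) ^ 2
      = 4 * (x ^ 2 * (y ^ 2 + δ) ^ 2 + y ^ 2 * (x ^ 2 + δ) ^ 2) := by ring
  rw [add_comm (y ^ 2 * (x ^ 2 + δ) ^ 2)] at hy
  rw [hE]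
  generalize x ^ 2 * (y ^ 2 + δ) ^ 2 + y ^ 2 * (x ^ 2 + δ) ^ 2 = G at *
  have e3 : |δ| ^ 3 = δ ^ 2 * |δ| := by rw [← hsq]; ring
  have hsum : x ^ 2 + y ^ 2 ≤ 4 * |δ| + 8 * G / δ ^ 2 := by
    have : δ ^ 2 * (x ^ 2 + y ^ 2) ≤ δ ^ 2 * (4 * |δ| + 8 * G / δ ^ 2) := by
      have e : δ ^ 2 * (4 * |δ| + 8 * G / δ ^ 2) = 4 * (δ ^ 2 * |δ|) + 8 * G := by
        field_simp
      rw [e]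
      linarith
    exact le_of_mul_le_mul_left this hp
  have h1 : δ ≤ |δ| := le_abs_self δ
  have e4 : (12 * |δ| + 4 / δ ^ 2) * (1 + 4 * G)
      = 12 * |δ| + 2 * (8 * G / δ ^ 2) + (4 / δ ^ 2 + 48 * (|δ| * G)) := by ring
  have h5 : 0 ≤ 4 / δ ^ 2 + 48 * (|δ| * G) := by positivity
  rw [e4]
  linarith

end
end

section
/- For every real δ with δ ≠ 0 and δ ≠ −1, let Φ_δ : ℝ² → ℝ be defined by Φ_δ(x₁, x₂) = (x₁² − x₂)² + δx₂². Then there exists a constant C > 0 (depending on δ) such that for all x = (x₁, x₂) ∈ ℝ²: |12x₁² − 4x₂| + |4x₁| + |2(1 + δ)x₂| ≤ C (1 + |∇Φ_δ(x)|); in particular every entry of the Hessian matrix of Φ_δ at x is bounded in absolute value by C (1 + |∇Φ_δ(x)|). -/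
open MeasureTheory Filter Topology Metric

noncomputable section

/-- for `Φ_δ(x) = (x₁² − x₂)² + δx₂²` with `δ ≠ 0, −1`, the entries of
the Hessian are controlled by `1 + |∇Φ_δ|`. -/
theorem Phidelta_hessian_controlled (δ : ℝ) (hδ : δ ≠ 0) (hδ' : δ ≠ -1) :
    ∃ C > (0 : ℝ), ∀ x₁ x₂ : ℝ,
      |12 * x₁ ^ 2 - 4 * x₂| + |4 * x₁| + |2 * (1 + δ) * x₂|
        ≤ C * (1 + Real.sqrt ((4 * x₁ * (x₁ ^ 2 - x₂)) ^ 2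
            + (-2 * (x₁ ^ 2 - x₂) + 2 * δ * x₂) ^ 2)) := by
  have hd : 0 < |δ| := abs_pos.mpr hδ
  have hm : 0 < |1 + δ| := abs_pos.mpr (fun h => hδ' (by linarith))
  obtain ⟨K, hK⟩ : ∃ K, K = (|1 + δ| / 4 + 1 / 2) / |δ| := ⟨_, rfl⟩
  have hK0 : 0 ≤ K := by rw [hK]; positivity
  have hKd : |δ| * K = |1 + δ| / 4 + 1 / 2 := by rw [hK]; field_simp
  obtain ⟨L, hL⟩ : ∃ L, L = (4 + 2 * |1 + δ|) / |1 + δ| := ⟨_, rfl⟩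
  have hL0 : 0 ≤ L := by rw [hL]; positivity
  have hLm : L * |1 + δ| = 4 + 2 * |1 + δ| := by rw [hL]; field_simp
  refine ⟨16 + 14 * K + L * (3 / 2 + K), by positivity, fun a y => ?_⟩
  obtain ⟨G, hG⟩ : ∃ G, G = Real.sqrt ((4 * a * (a ^ 2 - y)) ^ 2
            + (-2 * (a ^ 2 - y) + 2 * δ * y) ^ 2) := ⟨_, rfl⟩
  rw [← hG]
  have hG0 : 0 ≤ G := hG ▸ Real.sqrt_nonneg _
  have h1 : |4 * a * (a ^ 2 - y)| ≤ G := by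
    rw [hG]; exact Real.abs_le_sqrt (by nlinarith [sq_nonneg (-2 * (a ^ 2 - y) + 2 * δ * y)])
  have h2 : |-2 * (a ^ 2 - y) + 2 * δ * y| ≤ G := by
    rw [hG]; exact Real.abs_le_sqrt (by nlinarith [sq_nonneg (4 * a * (a ^ 2 - y))])
  have ha0 := abs_nonneg a
  have hcube : |δ| * |a| ^ 3 ≤ |1 + δ| * G / 4 + |a| * G / 2 := by
    have e : δ * a ^ 3 = (1 + δ) * (4 * a * (a ^ 2 - y)) / 4
        + a * (-2 * (a ^ 2 - y) + 2 * δ * y) / 2 := by ring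
    rw [← abs_pow, ← abs_mul, e]
    refine (abs_add_le _ _).trans ?_
    rw [abs_div, abs_div, abs_mul (1 + δ), abs_mul a, abs_of_pos (by norm_num : (0:ℝ) < 4),
      abs_of_pos (by norm_num : (0:ℝ) < 2)]
    gcongr
  have hsq : a ^ 2 ≤ 1 + K * G := by
    rw [← sq_abs]
    rcases le_total |a| 1 with h | h
    · nlinarith [mul_nonneg hK0 hG0]
    · have h3 : |a| * (|δ| * |a| ^ 2) ≤ |a| * (|δ| * (K * G)) := by
        have : |1 + δ| * G / 4 ≤ |a| * (|1 + δ| * G / 4) :=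
          le_mul_of_one_le_left (by positivity) h
        calc _ = |δ| * |a| ^ 3 := by ring
          _ ≤ |a| * ((|1 + δ| / 4 + 1 / 2) * G) := by linarith
          _ = _ := by rw [← hKd]; ring
      have h4 := le_of_mul_le_mul_left h3 (by linarith)
      have h5 := le_of_mul_le_mul_left h4 hd
      linarith
  have hy : |1 + δ| * |y| ≤ a ^ 2 + G / 2 := by
    have e : (1 + δ) * y = a ^ 2 + (-2 * (a ^ 2 - y) + 2 * δ * y) / 2 := by ring
    rw [← abs_mul, e]
    refine (abs_add_le _ _).trans ?_
    rw [abs_div, abs_of_pos (by norm_num : (0:ℝ) < 2), abs_of_nonneg (sq_nonneg a)]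
    gcongr
  have hLy : (4 + 2 * |1 + δ|) * |y| ≤ L * (1 + (K + 1 / 2) * G) := by
    rw [← hLm, mul_assoc]
    exact mul_le_mul_of_nonneg_left (by linarith) hL0
  have t1 : |12 * a ^ 2 - 4 * y| ≤ 12 * a ^ 2 + 4 * |y| := by
    refine (abs_sub _ _).trans ?_
    rw [abs_mul 4 y, abs_of_nonneg (by positivity : (0:ℝ) ≤ 12 * a ^ 2),
      abs_of_pos (by norm_num : (0:ℝ) < 4)]
  have t2 : |4 * a| ≤ 2 + 2 * a ^ 2 := by
    rw [abs_le]; constructor <;> nlinarith [sq_nonneg (a - 1), sq_nonneg (a + 1)]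
  have t3 : |2 * (1 + δ) * y| = 2 * |1 + δ| * |y| := by
    rw [abs_mul, abs_mul, abs_of_pos (by norm_num : (0:ℝ) < 2)]
  rw [t3]
  nlinarith [mul_nonneg hK0 hG0, mul_nonneg hL0 hG0, mul_nonneg hL0 hK0]

end
end

section
/- Let Φ : ℝ² → ℝ be defined by Φ(x₁, x₂) = x₁⁴ − 2x₁²x₂ (i.e. Φ = (x₁² − x₂)² − x₂²). Then for every integer k ≥ 2, every δ₁ ∈ (0,1), and every constant C > 0, there exists x ∈ ℝ² such that Σ_{j∈I_{x,Φ}} λ_{Φ,j}(x) > C ( M_Φ(x) + |∇Φ(x)|² + Σ_{2≤|α|≤k} |∂^α Φ(x)|^{(2−δ₁)/|α|} + 1 ). Indeed, at the points x = (0, x₂) with x₂ < 0 one has ∇Φ(0, x₂) = 0, the Hessian of Φ equals diag(−4x₂, 0), so the left-hand side equals 4|x₂| while the right-hand side is of order |x₂|^{1−δ₁/2} as x₂ → −∞. -/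
open MeasureTheory Filter Topology Metric

noncomputable section

/-- General family of polynomials stable under partial derivatives. -/
def GG (a b c d e p q r : ℝ) (x : En 2) : ℝ :=
  a * x 0 ^ 4 + b * x 0 ^ 3 + c * x 0 ^ 2 + d * x 0 + e + (p * x 0 ^ 2 + q * x 0 + r) * x 1

lemma GG_hasFDerivAt (a b c d e p q r : ℝ) (x : En 2) :
    HasFDerivAt (GG a b c d e p q r)
      ((GG 0 (4*a) (3*b) (2*c) d 0 (2*p) q x) • (EuclideanSpace.proj 0 : En 2 →L[ℝ] ℝ)
        + (GG 0 0 p q r 0 0 0 x) • (EuclideanSpace.proj 1 : En 2 →L[ℝ] ℝ)) x := by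
  have h0 : HasFDerivAt (fun x : En 2 => x 0) (EuclideanSpace.proj 0 : En 2 →L[ℝ] ℝ) x :=
    (EuclideanSpace.proj 0 : En 2 →L[ℝ] ℝ).hasFDerivAt
  have h1 : HasFDerivAt (fun x : En 2 => x 1) (EuclideanSpace.proj 1 : En 2 →L[ℝ] ℝ) x :=
    (EuclideanSpace.proj 1 : En 2 →L[ℝ] ℝ).hasFDerivAt
  have h := (((((h0.pow 4).const_mul a).add ((h0.pow 3).const_mul b)).add
    ((h0.pow 2).const_mul c)).add (h0.const_mul d)).add_const e |>.add
    (((((h0.pow 2).const_mul p).add (h0.const_mul q)).add_const r).mul h1)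
  refine HasFDerivAt.congr_fderiv (f := GG a b c d e p q r) h ?_
  ext v
  simp [GG]
  ring

lemma pd0_GG (a b c d e p q r : ℝ) :
    pd1 2 0 (GG a b c d e p q r) = GG 0 (4*a) (3*b) (2*c) d 0 (2*p) q := by
  funext x
  simp [pd1, (GG_hasFDerivAt a b c d e p q r x).fderiv]

lemma pd1_GG (a b c d e p q r : ℝ) :
    pd1 2 1 (GG a b c d e p q r) = GG 0 0 p q r 0 0 0 := by
  funext x
  simp [pd1, (GG_hasFDerivAt a b c d e p q r x).fderiv]

/-- Bounded members of the family. -/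
def SS (f : En 2 → ℝ) : Prop :=
  ∃ a b c d e p q r : ℝ, f = GG a b c d e p q r ∧ |a| ≤ 1 ∧ |b| ≤ 4 ∧ |c| ≤ 12 ∧ |d| ≤ 24 ∧
    |e| ≤ 24 ∧ |p| ≤ 12 ∧ |q| ≤ 24 ∧ |r| ≤ 24

lemma SS_pd (i : Fin 2) (f : En 2 → ℝ) (hf : SS f) : SS (pd1 2 i f) := by
  obtain ⟨a, b, c, d, e, p, q, r, rfl, ha, hb, hc, hd, he, hp, hq, hr⟩ := hf
  fin_cases i
  · refine ⟨_, _, _, _, _, _, _, _, pd0_GG a b c d e p q r, ?_⟩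
    simp only [abs_mul, abs_zero, Nat.abs_ofNat]
    refine ⟨?_, ?_, ?_, ?_, ?_, ?_, ?_, ?_⟩ <;> linarith
  · refine ⟨_, _, _, _, _, _, _, _, pd1_GG a b c d e p q r, ?_⟩
    simp only [abs_zero]
    refine ⟨?_, ?_, ?_, ?_, ?_, ?_, ?_, ?_⟩ <;> linarith

lemma SS_pow (i : Fin 2) (m : ℕ) (f : En 2 → ℝ) (hf : SS f) : SS (((pd1 2 i) ^ m) f) := by
  induction m with
  | zero => exact hf
  | succ m ih => rw [pow_succ']; exact SS_pd i _ ih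

lemma SS_pdm (α : Fin 2 → ℕ) (f : En 2 → ℝ) (hf : SS f) : SS (pdm 2 α f) := by
  have : pdm 2 α f = ((pd1 2 0) ^ (α 0)) (((pd1 2 1) ^ (α 1)) f) := by
    simp [pdm, List.ofFn_succ]
    rfl
  rw [this]
  exact SS_pow _ _ _ (SS_pow _ _ _ hf)

lemma SS_bound (f : En 2 → ℝ) (hf : SS f) (t : ℝ) (ht : 1 ≤ t) : |f !₂[0, -t]| ≤ 48 * t := by
  obtain ⟨a, b, c, d, e, p, q, r, rfl, ha, hb, hc, hd, he, hp, hq, hr⟩ := hf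
  simp [GG]
  rw [abs_le] at *
  constructor <;> nlinarith

lemma asymp (N s C : ℝ) (hs : s < 1) : ∃ t : ℝ, 1 ≤ t ∧ C * (N * (48 * t) ^ s + 1) < 4 * t := by
  have h1 : Tendsto (fun t : ℝ => (48 * t) ^ (s - 1)) atTop (𝓝 0) := by
    have := (tendsto_rpow_neg_atTop (y := 1 - s) (by linarith)).comp
      (tendsto_id.const_mul_atTop (show (0:ℝ) < 48 by norm_num))
    simpa [Function.comp_def] using this
  have h2 : Tendsto (fun t : ℝ => C * (N * (48 * (48 * t) ^ (s - 1)) + t⁻¹)) atTop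
      (𝓝 (C * (N * (48 * 0) + 0))) :=
    (((h1.const_mul 48).const_mul N).add tendsto_inv_atTop_zero).const_mul C
  have h3 := h2.eventually (gt_mem_nhds (show C * (N * (48 * 0) + 0) < 4 by norm_num))
  obtain ⟨t, ht, ht1⟩ := (h3.and (eventually_ge_atTop 1)).exists
  refine ⟨t, ht1, ?_⟩
  have h4 : (48 * t) ^ s = (48 * t) ^ (s - 1) * (48 * t) := by
    rw [← Real.rpow_add_one (by positivity)]; simp
  have h5 := mul_lt_mul_of_pos_right ht (show 0 < t by linarith)
  rw [h4]
  have h6 : t⁻¹ * t = 1 := inv_mul_cancel₀ (by linarith)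
  calc _ = C * (N * (48 * (48 * t) ^ (s - 1)) * t + t⁻¹ * t) := by rw [h6]; ring
    _ = C * (N * (48 * (48 * t) ^ (s - 1)) + t⁻¹) * t := by ring
    _ < _ := h5

/-- the potential `Φ(x) = x₁⁴ − 2x₁²x₂` violates condition (1.6) of
Assumption (i) for every `k ≥ 2`, `δ₁ ∈ (0,1)` and `C > 0`. -/
theorem Phi_violates_assumption (Φ : En 2 → ℝ)
    (hΦ : ∀ x : En 2, Φ x = (x 0) ^ 4 - 2 * (x 0) ^ 2 * (x 1)) :
    ∀ k : ℕ, 2 ≤ k → ∀ δ₁ ∈ Set.Ioo (0 : ℝ) 1, ∀ C > (0 : ℝ), ∃ x : En 2,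
      C * (lamNeg 2 Φ x + ‖gradient Φ x‖ ^ 2
          + (∑ α ∈ midx 2 k 2, |pdm 2 α Φ x| ^ ((2 - δ₁) / (mdeg α))) + 1)
        < lamPos 2 Φ x := by
  intro k hk δ hδ C hC
  obtain ⟨hδ0, hδ1⟩ := hδ
  have hG : Φ = GG 1 0 0 0 0 (-2) 0 0 := by
    funext x; rw [hΦ, GG]; ring
  have hS : SS Φ := ⟨1, 0, 0, 0, 0, -2, 0, 0, hG, by norm_num⟩
  obtain ⟨t, ht1, ht⟩ := asymp ((midx 2 k 2).card) ((2 - δ) / 2) C (by linarith)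
  refine ⟨!₂[0, -t], ?_⟩
  have hgrad : gradient Φ !₂[0, -t] = 0 := by
    rw [gradient, hG, (GG_hasFDerivAt _ _ _ _ _ _ _ _ _).fderiv]
    simp [GG]
  have hsum : ∑ α ∈ midx 2 k 2, |pdm 2 α Φ !₂[0, -t]| ^ ((2 - δ) / (mdeg α))
      ≤ (midx 2 k 2).card * (48 * t) ^ ((2 - δ) / 2) := by
    rw [← nsmul_eq_mul]
    refine Finset.sum_le_card_nsmul _ _ _ fun α hα => ?_
    have hα2 : (2 : ℝ) ≤ mdeg α := by
      simp only [midx, Finset.mem_filter] at hα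
      exact_mod_cast hα.2.1
    refine (Real.rpow_le_rpow (abs_nonneg _) (SS_bound _ (SS_pdm α Φ hS) t ht1)
      (div_nonneg (by linarith) (by linarith))).trans ?_
    exact Real.rpow_le_rpow_of_exponent_le (by linarith)
      (div_le_div_of_nonneg_left (by linarith) (by norm_num) hα2)
  have hM : hessM 2 Φ !₂[0, -t] = !![4 * t, 0; 0, 0] := by
    ext i j
    fin_cases i <;> fin_cases j <;> simp [hessM, hG, pd0_GG, pd1_GG] <;> simp [GG] <;> norm_num
  have hH : (hessM 2 Φ !₂[0, -t]).IsHermitian := by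
    rw [hM]
    ext i j
    fin_cases i <;> fin_cases j <;> simp
  have htr := hH.trace_eq_sum_eigenvalues
  have hdet := hH.det_eq_prod_eigenvalues
  have e1 : hessEig 2 Φ !₂[0, -t] = hH.eigenvalues := by
    rw [hessEig, dif_pos hH]
  rw [← e1] at htr hdet
  rw [hM] at htr hdet
  simp [Matrix.trace, Fin.sum_univ_two, Matrix.det_fin_two] at htr hdet
  have hpn : lamPos 2 Φ !₂[0, -t] = 4 * t ∧ lamNeg 2 Φ !₂[0, -t] = 0 := by
    simp only [lamPos, lamNeg, Fin.sum_univ_two]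
    rcases hdet with h | h
    · rw [h] at htr ⊢
      have : hessEig 2 Φ !₂[0, -t] 1 = 4 * t := by linarith
      rw [this]
      constructor
      · simp; linarith
      · simp; linarith
    · rw [h] at htr ⊢
      have : hessEig 2 Φ !₂[0, -t] 0 = 4 * t := by linarith
      rw [this]
      constructor
      · simp; linarith
      · simp; linarith
  rw [hpn.1, hpn.2, hgrad]
  refine lt_of_le_of_lt ?_ ht
  refine mul_le_mul_of_nonneg_left ?_ hC.le
  simp only [norm_zero]
  linarith

end
end
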